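/- arXiv:2002.12202 — 8 statements merged into one kernel-verified Lean document; each statement's English description precedes it below -/
import Mathlib

section
/- Let d, n, m ≥ 1 be integers, let a_1,…,a_d ∈ ℂ be pairwise distinct, let b_1,…,b_d ∈ ℂ be pairwise distinct, and set P(z) = ∏_{i=1}^d (z − a_i) and Q(z) = ∏_{i=1}^d (z − b_i). Let f, g ∈ ℂ[z] satisfy f(b_i) = a_i for all i and f^{(k)}(b_i) = 0 for all i and all 1 ≤ k ≤ n−1, and g(a_i) = b_i for all i and g^{(k)}(a_i) = 0 for all i and all 1 ≤ k ≤ m−1. Set A = ℂ[X,Y,Z,W]/(X^n Y − P(Z)) and B = ℂ[X,Y,Z,W]/(X^m Y − Q(Z)). Then there exist mutually inverse ℂ-algebra isomorphisms Φ : B → A and Ψ : A → B such that, writing x̄, ȳ, z̄, w̄ for the residue classes of X, Y, Z, W in each ring: Φ(x̄) = x̄, Φ(z̄) = g(z̄) + x̄^m w̄, x̄^m · Φ(ȳ) = Q(g(z̄) + x̄^m w̄), and x̄^n · Φ(w̄) = z̄ − f(g(z̄) + x̄^m w̄) hold in A; and Ψ(x̄) = x̄, Ψ(z̄) = f(z̄)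 + x̄^n w̄, x̄^n · Ψ(ȳ) = P(f(z̄) + x̄^n w̄), and x̄^m · Ψ(w̄) = z̄ − g(f(z̄) + x̄^n w̄) hold in B. -/
open MvPolynomial

/-- The coordinate ring `ℂ[X,Y,Z,W]/(X^k Y - P(Z))` of the cylinder over the classical
Danielewski surface `x^k y = P(z)`.  Variables: `X 0 = X`, `X 1 = Y`, `X 2 = Z`, `X 3 = W`. -/
abbrev CylRing (k : ℕ) (P : Polynomial ℂ) : Type :=
  MvPolynomial (Fin 4) ℂ ⧸
    Ideal.span {(X 0 : MvPolynomial (Fin 4) ℂ) ^ k * X 1 - Polynomial.aeval (X 2) P}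

/-- The canonical projection onto the coordinate ring of the cylinder. -/
noncomputable abbrev cylMk (k : ℕ) (P : Polynomial ℂ) :
    MvPolynomial (Fin 4) ℂ →+* CylRing k P :=
  Ideal.Quotient.mk _

/-!
Put `t = g(z) + x^m w`. A homomorphism with `z ↦ t` as required exists once `x^m ∣ Q(t)` and
`x^n ∣ z - f(t)`.

* Each factor `g - b_i` of `Q ∘ g` is divisible by `(X - a_i)^m`, so `P^m ∣ Q ∘ g`. Since
  `x ∣ P(z)`, this gives `x^m ∣ Q(g(z))`, and `Q(t) ≡ Q(g(z))` modulo `x^m`.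
* Modulo `z - a_i` one has `t ≡ b_i + x^m w`, hence `f(t) ≡ a_i ≡ z` modulo `(x^n, z - a_i)`. The
  `z - a_i` are pairwise coprime, so modulo `x^n` their product `P(z) = x^n y = 0` divides
  `z - f(t)`.

The homomorphisms so obtained in the two directions compose to maps fixing `x` and `z`, and then
also `y` and `w`, because `x` is a non-zero-divisor.
-/

lemma X_sub_C_pow_dvd_sub_C_eval_of_iterate_derivative {K : Type*} [CommRing K] [IsDomain K]
    [CharZero K] {n : ℕ} {f : Polynomial K} {b : K}
    (h : ∀ k, 1 ≤ k → k ≤ n - 1 → (Polynomial.derivative^[k] f).eval b = 0) :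
    (Polynomial.X - Polynomial.C b) ^ n ∣ f - Polynomial.C (f.eval b) := by
  rcases eq_or_ne (f - Polynomial.C (f.eval b)) 0 with hf | hf
  · simp [hf]
  rcases n with _ | n
  · simp
  refine (Polynomial.le_rootMultiplicity_iff hf).1
    (Polynomial.lt_rootMultiplicity_of_isRoot_iterate_derivative hf fun k hk => ?_)
  rcases k with _ | k
  · simp
  · simpa [Polynomial.IsRoot] using h (k + 1) (by omega) (by omega)

lemma eval_eq_of_X_sub_C_pow_dvd_sub_C {K : Type*} [CommRing K] {n : ℕ} (hn : n ≠ 0)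
    {f : Polynomial K} {a b : K}
    (h : (Polynomial.X - Polynomial.C b) ^ n ∣ f - Polynomial.C a) : f.eval b = a := by
  simpa [Polynomial.dvd_iff_isRoot, sub_eq_zero] using (dvd_pow_self _ hn).trans h

lemma prod_X_sub_C_pow_dvd_comp {K ι : Type*} [CommRing K] [Fintype ι] {a b : ι → K} {m : ℕ}
    {g : Polynomial K}
    (hg : ∀ i, (Polynomial.X - Polynomial.C (a i)) ^ m ∣ g - Polynomial.C (b i)) :
    (∏ i, (Polynomial.X - Polynomial.C (a i))) ^ m ∣
      (∏ i, (Polynomial.X - Polynomial.C (b i))).comp g := by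
  rw [← Finset.prod_pow, Polynomial.prod_comp]
  exact Finset.prod_dvd_prod_of_dvd _ _ fun i _ => by simpa using hg i

section Divisibility

variable {K R : Type*} [CommRing K] [CommRing R] [Algebra K R]

lemma sub_dvd_aeval_sub_aeval (p : Polynomial K) (s t : R) :
    s - t ∣ Polynomial.aeval s p - Polynomial.aeval t p := by
  simpa only [Polynomial.eval_map_algebraMap] using
    Polynomial.sub_dvd_eval_sub s t (p.map (algebraMap K R))

lemma pow_dvd_aeval_add_of_pow_dvd_comp {P Q g : Polynomial K} {m : ℕ} {x z : R} (w : R)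
    (hx : x ∣ Polynomial.aeval z P) (hPQ : P ^ m ∣ Q.comp g) :
    x ^ m ∣ Polynomial.aeval (Polynomial.aeval z g + x ^ m * w) Q := by
  have hzg : x ^ m ∣ Polynomial.aeval (Polynomial.aeval z g) Q := by
    rw [← Polynomial.aeval_comp]
    exact (pow_dvd_pow_of_dvd hx m).trans (by simpa using map_dvd (Polynomial.aeval z) hPQ)
  refine (dvd_sub_left hzg).1 (dvd_trans ?_ (sub_dvd_aeval_sub_aeval Q _ _))
  simp

lemma sub_dvd_sub_aeval_aeval_add {f g : Polynomial K} {a b : K} {n : ℕ}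
    (hf : (Polynomial.X - Polynomial.C b) ^ n ∣ f - Polynomial.C a) (hg : g.eval a = b)
    (z : R) {v : R} (hv : v ^ n = 0) :
    z - algebraMap K R a ∣ z - Polynomial.aeval (Polynomial.aeval z g + v) f := by
  set t := Polynomial.aeval z g + v with ht
  have hzt : z - algebraMap K R a ∣ t - algebraMap K R b - v := by
    rw [ht, add_sub_right_comm, add_sub_cancel_right, ← hg,
      ← Polynomial.aeval_algebraMap_apply_eq_algebraMap_eval]
    exact sub_dvd_aeval_sub_aeval g z (algebraMap K R a)
  have htn : z - algebraMap K R a ∣ (t - algebraMap K R b) ^ n := by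
    simpa [hv] using hzt.trans (sub_dvd_pow_sub_pow _ _ n)
  have hft : (t - algebraMap K R b) ^ n ∣ Polynomial.aeval t f - algebraMap K R a := by
    simpa using map_dvd (Polynomial.aeval t) hf
  simpa using dvd_sub dvd_rfl (htn.trans hft)

variable {ι : Type*} [Fintype ι] {a b : ι → K} {f g : Polynomial K} {n m : ℕ}

lemma aeval_prod_X_sub_C_dvd (ha : Pairwise fun i j => IsUnit (a i - a j)) {z r : R}
    (h : ∀ i, z - algebraMap K R (a i) ∣ r) :
    Polynomial.aeval z (∏ i, (Polynomial.X - Polynomial.C (a i))) ∣ r := by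
  rw [map_prod]
  refine Fintype.prod_dvd_of_coprime (fun i j hij => ?_) fun i => by simpa using h i
  exact (Polynomial.isCoprime_X_sub_C_of_isUnit_sub (ha hij)).map (Polynomial.aeval z).toRingHom

lemma pow_dvd_sub_aeval_aeval_add (ha : Pairwise fun i j => IsUnit (a i - a j)) (hm : m ≠ 0)
    (hf : ∀ i, (Polynomial.X - Polynomial.C (b i)) ^ n ∣ f - Polynomial.C (a i))
    (hg : ∀ i, g.eval (a i) = b i) {x z : R} (w : R)
    (hx : x ^ n ∣ Polynomial.aeval z (∏ i, (Polynomial.X - Polynomial.C (a i)))) :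
    x ^ n ∣ z - Polynomial.aeval (Polynomial.aeval z g + x ^ m * w) f := by
  let π := Ideal.Quotient.mkₐ K (Ideal.span {x ^ n})
  have hπ (r : R) : π r = 0 ↔ x ^ n ∣ r := Ideal.Quotient.eq_zero_iff_dvd _ _
  have hv : π (x ^ m * w) ^ n = 0 := by
    rw [← map_pow, hπ, mul_pow, ← pow_mul, mul_comm m, pow_mul]
    exact (dvd_pow_self _ hm).mul_right _
  have h := aeval_prod_X_sub_C_dvd ha fun i => sub_dvd_sub_aeval_aeval_add (hf i) (hg i) (π z) hv
  rw [Polynomial.aeval_algHom_apply, (hπ _).2 hx, zero_dvd_iff] at h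
  rwa [← hπ, map_sub, ← Polynomial.aeval_algHom_apply, map_add, ← Polynomial.aeval_algHom_apply]

end Divisibility

lemma C_dvd_of_C_dvd_monic_mul {S : Type*} [CommRing S] {c : S} {p q : Polynomial S}
    (hp : p.Monic) (h : Polynomial.C c ∣ p * q) : Polynomial.C c ∣ q := by
  have hmap (r : Polynomial S) :
      Polynomial.C c ∣ r ↔ r.map (Ideal.Quotient.mk (Ideal.span {c})) = 0 := by
    simp [Polynomial.C_dvd_iff_dvd_coeff, Polynomial.ext_iff, Ideal.Quotient.eq_zero_iff_dvd]
  rw [hmap, Polynomial.map_mul] at h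
  exact (hmap q).2 ((hp.map _).mul_right_eq_zero_iff.1 h)

lemma X_dvd_of_X_dvd_aeval_X_mul {K σ : Type*} [CommRing K] {i j : σ} (hij : i ≠ j)
    {P : Polynomial K} (hP : P.Monic) {p : MvPolynomial σ K}
    (h : X i ∣ Polynomial.aeval (X j : MvPolynomial σ K) P * p) : X i ∣ p := by
  classical
  let e := (renameEquiv K (Equiv.optionSubtypeNe j).symm).trans (optionEquivLeft K {k // k ≠ j})
  have hi : e (X i) = Polynomial.C (X ⟨i, hij⟩) := by
    simp [e, Equiv.optionSubtypeNe_symm_of_ne hij]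
  have hj : e (X j) = Polynomial.X := by simp [e]
  have heP : e (Polynomial.aeval (X j) P) = P.map (algebraMap K _) := by
    rw [← Polynomial.aeval_algHom_apply, hj, Polynomial.aeval_X_left_eq_map]
  rw [← map_dvd_iff e, hi] at h ⊢
  rw [map_mul, heP] at h
  exact C_dvd_of_C_dvd_monic_mul (hP.map _) h

/-- The coordinate ring `K[X, Y, Z, W] / (X^k Y - P(Z))` of the cylinder over the Danielewski
surface `x^k y = P(z)`, with the variables `X, Y, Z, W` indexed by `Fin 4` in this order. -/
abbrev DanielewskiCylinder {K : Type*} [CommRing K] (k : ℕ) (P : Polynomial K) : Type _ :=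
  MvPolynomial (Fin 4) K ⧸
    Ideal.span {(X 0 : MvPolynomial (Fin 4) K) ^ k * X 1 - Polynomial.aeval (X 2) P}

namespace DanielewskiCylinder

variable {K : Type*} [CommRing K]

section Coordinates

variable (k : ℕ) (P : Polynomial K)

/-- The coordinate function `x`, the residue class of `X`. -/
noncomputable abbrev x : DanielewskiCylinder k P := Ideal.Quotient.mk _ (X 0)

/-- The coordinate function `y`, the residue class of `Y`. -/
noncomputable abbrev y : DanielewskiCylinder k P := Ideal.Quotient.mk _ (X 1)

/-- The coordinate function `z`, the residue class of `Z`. -/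
noncomputable abbrev z : DanielewskiCylinder k P := Ideal.Quotient.mk _ (X 2)

/-- The coordinate function `w` along the line factor, the residue class of `W`. -/
noncomputable abbrev w : DanielewskiCylinder k P := Ideal.Quotient.mk _ (X 3)

lemma x_pow_mul_y : x k P ^ k * y k P = Polynomial.aeval (z k P) P := by
  have h := Ideal.Quotient.mk_singleton_self
    ((X 0 : MvPolynomial (Fin 4) K) ^ k * X 1 - Polynomial.aeval (X 2) P)
  rw [map_sub, map_mul, map_pow, sub_eq_zero] at h
  let π : MvPolynomial (Fin 4) K →ₐ[K] DanielewskiCylinder k P := Ideal.Quotient.mkₐ K _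
  exact h.trans (Polynomial.aeval_algHom_apply π (X 2) P).symm

end Coordinates

variable {R : Type*} [CommRing R] [Algebra K R] {k : ℕ} {P : Polynomial K}

lemma exists_algHom {x' y' z' w' : R} (h : x' ^ k * y' = Polynomial.aeval z' P) :
    ∃ φ : DanielewskiCylinder k P →ₐ[K] R,
      φ (x k P) = x' ∧ φ (y k P) = y' ∧ φ (z k P) = z' ∧ φ (w k P) = w' := by
  let ψ : MvPolynomial (Fin 4) K →ₐ[K] R := aeval ![x', y', z', w']
  have hψ : ∀ p ∈ Ideal.span
      {(X 0 : MvPolynomial (Fin 4) K) ^ k * X 1 - Polynomial.aeval (X 2) P}, ψ p = 0 := by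
    intro p hp
    obtain ⟨q, rfl⟩ := Ideal.mem_span_singleton.1 hp
    rw [map_mul, map_sub, ← Polynomial.aeval_algHom_apply]
    simp [ψ, h]
  exact ⟨Ideal.Quotient.liftₐ _ ψ hψ, aeval_X _ 0, aeval_X _ 1, aeval_X _ 2, aeval_X _ 3⟩

lemma algHom_ext_of_isLeftRegular {φ ψ : DanielewskiCylinder k P →ₐ[K] R}
    (hreg : IsLeftRegular (ψ (x k P))) (hx : φ (x k P) = ψ (x k P))
    (hz : φ (z k P) = ψ (z k P)) (hw : φ (w k P) = ψ (w k P)) : φ = ψ := by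
  have hy : φ (y k P) = ψ (y k P) := by
    apply hreg.pow k
    calc ψ (x k P) ^ k * φ (y k P)
        = φ (Polynomial.aeval (z k P) P) := by rw [← hx, ← map_pow, ← map_mul, x_pow_mul_y]
      _ = ψ (Polynomial.aeval (z k P) P) := by
        rw [← Polynomial.aeval_algHom_apply, hz, Polynomial.aeval_algHom_apply]
      _ = ψ (x k P) ^ k * ψ (y k P) := by rw [← x_pow_mul_y, map_mul, map_pow]
  refine Ideal.Quotient.algHom_ext _ (MvPolynomial.algHom_ext fun i => ?_)
  fin_cases i
  exacts [hx, hy, hz, hw]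

-- `X` is regular modulo `F = X^k Y - P(Z)` because `F ≡ -P(Z)` is regular modulo `X`.
lemma isLeftRegular_x (hk : k ≠ 0) (hP : P.Monic) : IsLeftRegular (x k P) := by
  refine isLeftRegular_iff_right_eq_zero_of_mul.2 fun r hr => ?_
  obtain ⟨u, rfl⟩ := Ideal.Quotient.mk_surjective r
  rw [← map_mul, Ideal.Quotient.eq_zero_iff_dvd] at hr
  obtain ⟨v, hv⟩ := hr
  have hXv : X 0 ∣ Polynomial.aeval (X 2 : MvPolynomial (Fin 4) K) P * v := by
    have h : Polynomial.aeval (X 2) P * v = X 0 ^ k * (X 1 * v) - X 0 * u := by rw [hv]; ring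
    rw [h]
    exact dvd_sub ((dvd_pow_self _ hk).mul_right _) (dvd_mul_right _ _)
  obtain ⟨v', rfl⟩ := X_dvd_of_X_dvd_aeval_X_mul (by decide) hP hXv
  rw [Ideal.Quotient.eq_zero_iff_dvd]
  exact ⟨v', isRegular_X.left (hv.trans (mul_left_comm _ _ _))⟩

/-- `φ` is a transition map from the cylinder over `x^m y = Q(z)` to the cylinder over
`x^n y = P(z)`: it fixes `x`, sends `z` to `g(z) + x^m w`, and sends `w` to the element
`x^(-n) (z - f(g(z) + x^m w))`, the last condition being stated without denominators. -/
structure IsTransition (n m : ℕ) (P Q f g : Polynomial K)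
    (φ : DanielewskiCylinder m Q →ₐ[K] DanielewskiCylinder n P) : Prop where
  map_x : φ (x m Q) = x n P
  map_z : φ (z m Q) = Polynomial.aeval (z n P) g + x n P ^ m * w n P
  map_w : x n P ^ n * φ (w m Q) =
    z n P - Polynomial.aeval (Polynomial.aeval (z n P) g + x n P ^ m * w n P) f

namespace IsTransition

variable {n m : ℕ} {P Q f g : Polynomial K}
  {φ : DanielewskiCylinder m Q →ₐ[K] DanielewskiCylinder n P}
  {ψ : DanielewskiCylinder n P →ₐ[K] DanielewskiCylinder m Q}

lemma map_y (hφ : IsTransition n m P Q f g φ) :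
    x n P ^ m * φ (y m Q) =
      Polynomial.aeval (Polynomial.aeval (z n P) g + x n P ^ m * w n P) Q := by
  rw [← hφ.map_z, ← hφ.map_x, ← map_pow, ← map_mul, x_pow_mul_y,
    Polynomial.aeval_algHom_apply φ]

lemma comp_eq_id (hφ : IsTransition n m P Q f g φ) (hψ : IsTransition m n Q P g f ψ)
    (hx : IsLeftRegular (x m Q)) : ψ.comp φ = AlgHom.id K (DanielewskiCylinder m Q) := by
  have hz : ψ (φ (z m Q)) = z m Q := by
    rw [hφ.map_z, map_add, map_mul, map_pow, ← Polynomial.aeval_algHom_apply, hψ.map_x,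
      hψ.map_w, hψ.map_z, add_sub_cancel]
  have hw : ψ (φ (w m Q)) = w m Q := by
    apply hx.pow n
    calc x m Q ^ n * ψ (φ (w m Q))
        = ψ (z n P) - Polynomial.aeval (ψ (φ (z m Q))) f := by
          rw [← hψ.map_x, ← map_pow, ← map_mul, hφ.map_w, map_sub, ← hφ.map_z,
            Polynomial.aeval_algHom_apply ψ]
      _ = x m Q ^ n * w m Q := by rw [hz, hψ.map_z, add_sub_cancel_left]
  exact algHom_ext_of_isLeftRegular hx ((congrArg ψ hφ.map_x).trans hψ.map_x) hz hw

end IsTransition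

lemma exists_isTransition {ι : Type*} [Fintype ι] {n m : ℕ} (hn : n ≠ 0) (hm : m ≠ 0)
    {a b : ι → K} (ha : Pairwise fun i j => IsUnit (a i - a j)) {f g : Polynomial K}
    (hf : ∀ i, (Polynomial.X - Polynomial.C (b i)) ^ n ∣ f - Polynomial.C (a i))
    (hg : ∀ i, (Polynomial.X - Polynomial.C (a i)) ^ m ∣ g - Polynomial.C (b i)) :
    ∃ φ, IsTransition n m (∏ i, (Polynomial.X - Polynomial.C (a i)))
      (∏ i, (Polynomial.X - Polynomial.C (b i))) f g φ := by
  set P := ∏ i, (Polynomial.X - Polynomial.C (a i))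
  have hxn : x n P ^ n ∣ Polynomial.aeval (z n P) P := Dvd.intro _ (x_pow_mul_y n P)
  have hga (i : ι) : g.eval (a i) = b i := eval_eq_of_X_sub_C_pow_dvd_sub_C hm (hg i)
  obtain ⟨y', hy'⟩ := pow_dvd_aeval_add_of_pow_dvd_comp (w n P) ((dvd_pow_self _ hn).trans hxn)
    (prod_X_sub_C_pow_dvd_comp hg)
  obtain ⟨w', hw'⟩ := pow_dvd_sub_aeval_aeval_add ha hm hf hga (w n P) hxn
  obtain ⟨φ, hx, -, hz, hw⟩ := exists_algHom (w' := w') hy'.symm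
  exact ⟨φ, hx, hz, hw ▸ hw'.symm⟩

end DanielewskiCylinder

open DanielewskiCylinder in
theorem cylinders_of_classical_Danielewski_surfaces_explicit_iso_general
    {K ι : Type*} [CommRing K] [Fintype ι] {n m : ℕ} (hn : n ≠ 0) (hm : m ≠ 0) {a b : ι → K}
    (ha : Pairwise fun i j => IsUnit (a i - a j)) {P Q f g : Polynomial K}
    (hP : P = ∏ i, (Polynomial.X - Polynomial.C (a i)))
    (hQ : Q = ∏ i, (Polynomial.X - Polynomial.C (b i)))
    (hf : ∀ i, (Polynomial.X - Polynomial.C (b i)) ^ n ∣ f - Polynomial.C (a i))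
    (hg : ∀ i, (Polynomial.X - Polynomial.C (a i)) ^ m ∣ g - Polynomial.C (b i)) :
    ∃ Φ : DanielewskiCylinder m Q ≃ₐ[K] DanielewskiCylinder n P,
      IsTransition n m P Q f g Φ ∧ IsTransition m n Q P g f Φ.symm := by
  subst hP hQ
  have hfb (i : ι) : f.eval (b i) = a i := eval_eq_of_X_sub_C_pow_dvd_sub_C hn (hf i)
  have hb : Pairwise fun i j => IsUnit (b i - b j) := fun i j hij =>
    isUnit_of_dvd_unit (by simpa only [hfb] using Polynomial.sub_dvd_eval_sub (b i) (b j) f)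
      (ha hij)
  obtain ⟨φ, hφ⟩ := exists_isTransition hn hm ha hf hg
  obtain ⟨ψ, hψ⟩ := exists_isTransition hm hn hb hg hf
  have hφψ := hψ.comp_eq_id hφ (isLeftRegular_x hn (Polynomial.monic_prod_X_sub_C a _))
  have hψφ := hφ.comp_eq_id hψ (isLeftRegular_x hm (Polynomial.monic_prod_X_sub_C b _))
  exact ⟨AlgEquiv.ofAlgHom φ ψ hφψ hψφ, hφ, hψ⟩

theorem cylinders_of_classical_Danielewski_surfaces_explicit_iso
    (d n m : ℕ) (hd : 1 ≤ d) (hn : 1 ≤ n) (hm : 1 ≤ m)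
    (a b : Fin d → ℂ) (ha : Function.Injective a) (hb : Function.Injective b)
    (P Q : Polynomial ℂ)
    (hP : P = ∏ i, (Polynomial.X - Polynomial.C (a i)))
    (hQ : Q = ∏ i, (Polynomial.X - Polynomial.C (b i)))
    (f g : Polynomial ℂ)
    (hf0 : ∀ i, f.eval (b i) = a i)
    (hf1 : ∀ i, ∀ k, 1 ≤ k → k ≤ n - 1 → (Polynomial.derivative^[k] f).eval (b i) = 0)
    (hg0 : ∀ i, g.eval (a i) = b i)
    (hg1 : ∀ i, ∀ k, 1 ≤ k → k ≤ m - 1 → (Polynomial.derivative^[k] g).eval (a i) = 0) :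
    ∃ Φ : CylRing m Q ≃ₐ[ℂ] CylRing n P,
      -- the conditions on Φ : B → A
      Φ (cylMk m Q (X 0)) = cylMk n P (X 0) ∧
      Φ (cylMk m Q (X 2)) =
        Polynomial.aeval (cylMk n P (X 2)) g + (cylMk n P (X 0)) ^ m * cylMk n P (X 3) ∧
      (cylMk n P (X 0)) ^ m * Φ (cylMk m Q (X 1)) =
        Polynomial.aeval
          (Polynomial.aeval (cylMk n P (X 2)) g + (cylMk n P (X 0)) ^ m * cylMk n P (X 3)) Q ∧
      (cylMk n P (X 0)) ^ n * Φ (cylMk m Q (X 3)) =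
        cylMk n P (X 2) - Polynomial.aeval
          (Polynomial.aeval (cylMk n P (X 2)) g + (cylMk n P (X 0)) ^ m * cylMk n P (X 3)) f ∧
      -- the conditions on the inverse isomorphism Ψ = Φ⁻¹ : A → B
      Φ.symm (cylMk n P (X 0)) = cylMk m Q (X 0) ∧
      Φ.symm (cylMk n P (X 2)) =
        Polynomial.aeval (cylMk m Q (X 2)) f + (cylMk m Q (X 0)) ^ n * cylMk m Q (X 3) ∧
      (cylMk m Q (X 0)) ^ n * Φ.symm (cylMk n P (X 1)) =
        Polynomial.aeval
          (Polynomial.aeval (cylMk m Q (X 2)) f + (cylMk m Q (X 0)) ^ n * cylMk m Q (X 3)) P ∧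
      (cylMk m Q (X 0)) ^ m * Φ.symm (cylMk n P (X 3)) =
        cylMk m Q (X 2) - Polynomial.aeval
          (Polynomial.aeval (cylMk m Q (X 2)) f + (cylMk m Q (X 0)) ^ n * cylMk m Q (X 3)) g := by
  obtain ⟨Φ, hΦ, hΨ⟩ := cylinders_of_classical_Danielewski_surfaces_explicit_iso_general
    (Nat.ne_zero_of_lt hn) (Nat.ne_zero_of_lt hm)
    (fun _ _ hij => (sub_ne_zero.2 (ha.ne hij)).isUnit) hP hQ
    (fun i => hf0 i ▸ X_sub_C_pow_dvd_sub_C_eval_of_iterate_derivative (hf1 i))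
    (fun i => hg0 i ▸ X_sub_C_pow_dvd_sub_C_eval_of_iterate_derivative (hg1 i))
  exact ⟨Φ, hΦ.map_x, hΦ.map_z, hΦ.map_y, hΦ.map_w, hΨ.map_x, hΨ.map_z, hΨ.map_y, hΨ.map_w⟩
end

section
/- Let n ≥ 1 and let Q(x,z) ∈ ℂ[x,z] be such that Q(0,z) ∈ ℂ[z] has degree d ≥ 2 and only simple roots. Let P ∈ ℂ[z] be any monic polynomial of degree d with only simple roots. Then the ℂ-algebras ℂ[X,Y,Z,W]/(X^n Y − Q(X,Z)) and ℂ[X,Y,Z,W]/(XY − P(Z)) are isomorphic; that is, the cylinder over the Danielewski hypersurface x^n y = Q(x,z) is isomorphic to the cylinder over the classical Danielewski surface x y = P(z). -/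
open MvPolynomial

/-- The coordinate ring `ℂ[X,Y,Z,W]/(X^n Y - Q(X,Z))` of the cylinder over the Danielewski
hypersurface `x^n y = Q(x,z)`, where `Q` is a polynomial in two variables (`X 0 = x`,
`X 1 = z`).  Variables of the ambient ring: `X 0 = X`, `X 1 = Y`, `X 2 = Z`, `X 3 = W`. -/
abbrev DHCylRing (n : ℕ) (Q : MvPolynomial (Fin 2) ℂ) : Type :=
  MvPolynomial (Fin 4) ℂ ⧸
    Ideal.span {(X 0 : MvPolynomial (Fin 4) ℂ) ^ n * X 1 -
      MvPolynomial.aeval ![(X 0 : MvPolynomial (Fin 4) ℂ), X 2] Q}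

/-- The coordinate ring `ℂ[X,Y,Z,W]/(X Y - P(Z))` of the cylinder over the classical
Danielewski surface `x y = P(z)`. -/
abbrev WCylRing (P : Polynomial ℂ) : Type :=
  MvPolynomial (Fin 4) ℂ ⧸
    Ideal.span {(X 0 : MvPolynomial (Fin 4) ℂ) * X 1 - Polynomial.aeval (X 2) P}

/-!
This is Danielewski's fibre product trick. The hypersurface `x ^ n * y = Q(x, z)` is an
`𝔸¹`-bundle over the affine line whose origin is replaced by the roots of `Q(0, z)`, so matching
these roots with those of `P(0, z)` puts `x ^ n * y₁ = Q(x, z₁)` and `x ^ m * y₂ = P(x, z₂)` over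
the same base. Their fibre product is a trivial line bundle over each of them: Newton iteration
produces a polynomial `η(x, z₁)` which is a root of `P(x, ·)` modulo `x ^ m`, Hensel uniqueness
shows that `z₂` agrees with it modulo `x ^ m`, and `w = (z₂ - η(x, z₁)) / x ^ m` is a global fibre
coordinate. Hence both cylinders represent the fibre product among algebras in which `x` is regular.
-/

namespace Danielewski

open scoped Polynomial

section Hensel

variable {R : Type*} [CommRing R] (f : R[X]) {x a b c : R} {n : ℕ}

theorem pow_succ_dvd_eval_newton_step (hc : x ∣ c * f.derivative.eval a - 1)
    (hx : x ∣ f.eval a) (hn : x ^ n ∣ f.eval a) :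
    x ^ (n + 1) ∣ f.eval (a - c * f.eval a) := by
  obtain ⟨k, hk⟩ := f.binomExpansion a (-(c * f.eval a))
  have expansion : f.eval (a - c * f.eval a) =
      f.eval a * (k * c ^ 2 * f.eval a - (c * f.derivative.eval a - 1)) := by
    rw [sub_eq_add_neg, hk]
    ring
  rw [expansion, pow_succ]
  exact mul_dvd_mul hn ((hx.mul_left _).sub hc)

theorem pow_dvd_sub_of_pow_dvd_eval (hc : x ∣ c * f.derivative.eval a - 1) (hab : x ∣ a - b)
    (ha : x ^ n ∣ f.eval a) (hb : x ^ n ∣ f.eval b) : x ^ n ∣ a - b := by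
  obtain ⟨k, hk⟩ := f.binomExpansion a (b - a)
  obtain ⟨s, hs⟩ := hc
  obtain ⟨t, ht⟩ := hab
  rw [add_sub_cancel] at hk
  have factorization : (a - b) * (1 + x * (s - c * k * t)) = c * (f.eval a - f.eval b) := by
    linear_combination c * hk - (a - b) * hs + (a - b) * c * k * ht
  have coprime : IsCoprime (x ^ n) (1 + x * (s - c * k * t)) :=
    IsCoprime.pow_left ⟨-(s - c * k * t), 1, by ring⟩
  refine coprime.dvd_of_dvd_mul_right ?_
  rw [factorization]
  exact (ha.sub hb).mul_left c

end Hensel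

section Roots

open Polynomial

theorem exists_comp_of_adjoinRoot_algEquiv {k : Type*} [CommRing k] {p q : k[X]}
    (e : AdjoinRoot q ≃ₐ[k] AdjoinRoot p) :
    ∃ g h : k[X], q ∣ p.comp h ∧ p ∣ q.comp g ∧
      q ∣ g.comp h - Polynomial.X ∧ p ∣ h.comp g - Polynomial.X := by
  obtain ⟨g, hg⟩ := AdjoinRoot.mk_surjective (e (AdjoinRoot.root q))
  obtain ⟨h, hh⟩ := AdjoinRoot.mk_surjective (e.symm (AdjoinRoot.root p))
  have mk_comp_g (f : k[X]) : AdjoinRoot.mk p (f.comp g) = e (AdjoinRoot.mk q f) := by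
    rw [← AdjoinRoot.aeval_eq, aeval_comp, AdjoinRoot.aeval_eq, hg, aeval_algHom_apply,
      AdjoinRoot.aeval_eq]
  have mk_comp_h (f : k[X]) : AdjoinRoot.mk q (f.comp h) = e.symm (AdjoinRoot.mk p f) := by
    rw [← AdjoinRoot.aeval_eq, aeval_comp, AdjoinRoot.aeval_eq, hh, aeval_algHom_apply,
      AdjoinRoot.aeval_eq]
  refine ⟨g, h, ?_, ?_, ?_, ?_⟩
  · rw [← AdjoinRoot.mk_eq_zero, mk_comp_h, AdjoinRoot.mk_self, map_zero]
  · rw [← AdjoinRoot.mk_eq_zero, mk_comp_g, AdjoinRoot.mk_self, map_zero]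
  · rw [← AdjoinRoot.mk_eq_mk, mk_comp_h, hg, e.symm_apply_apply, AdjoinRoot.mk_X]
  · rw [← AdjoinRoot.mk_eq_mk, mk_comp_g, hh, e.apply_symm_apply, AdjoinRoot.mk_X]

variable {K : Type*} [Field K] {p q : K[X]}

theorem nonempty_adjoinRoot_algEquiv_pi (hsep : p.Separable) (hsplits : p.Splits) :
    Nonempty (AdjoinRoot p ≃ₐ[K] (p.rootSet K → K)) := by
  let evalRoots : AdjoinRoot p →ₐ[K] (p.rootSet K → K) :=
    AlgHom.pi fun r ↦ AdjoinRoot.liftAlgHom p (Algebra.ofId K K) r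
      (aeval_eq_zero_of_mem_rootSet r.2)
  have surjective : Function.Surjective evalRoots := fun y ↦ by
    obtain ⟨f, hf⟩ := (exists_eval_eq_iff (fun r : p.rootSet K ↦ (r : K)) y).mpr
      fun i j hij ↦ congrArg y (Subtype.ext hij)
    exact ⟨AdjoinRoot.mk p f, funext hf⟩
  have finrank_eq : Module.finrank K (AdjoinRoot p) = Module.finrank K (p.rootSet K → K) := by
    rw [Module.finrank_pi, card_rootSet_eq_natDegree hsep (by simpa using hsplits)]
    exact finrank_quotient_span_eq_natDegree
  have : Module.Finite K (AdjoinRoot p) := (AdjoinRoot.powerBasis hsep.ne_zero).finite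
  have injective : Function.Injective evalRoots :=
    (LinearMap.injective_iff_surjective_of_finrank_eq_finrank finrank_eq
      (f := evalRoots.toLinearMap)).mpr surjective
  exact ⟨AlgEquiv.ofBijective evalRoots ⟨injective, surjective⟩⟩

theorem nonempty_adjoinRoot_algEquiv_of_natDegree_eq (hp : p.Separable) (hp' : p.Splits)
    (hq : q.Separable) (hq' : q.Splits) (hdeg : p.natDegree = q.natDegree) :
    Nonempty (AdjoinRoot p ≃ₐ[K] AdjoinRoot q) := by
  obtain ⟨e₁⟩ := nonempty_adjoinRoot_algEquiv_pi hp hp'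
  obtain ⟨e₂⟩ := nonempty_adjoinRoot_algEquiv_pi hq hq'
  have card_eq : Fintype.card (p.rootSet K) = Fintype.card (q.rootSet K) := by
    rw [card_rootSet_eq_natDegree hp (by simpa using hp'),
      card_rootSet_eq_natDegree hq (by simpa using hq'), hdeg]
  exact ⟨e₁.trans ((AlgEquiv.piCongrLeft K _ (Fintype.equivOfCardEq card_eq)).trans e₂.symm)⟩

end Roots

section Slice

variable {k R S : Type*} [CommRing k] [CommRing R] [Algebra k R] [CommRing S] [Algebra k S]

/-- The polynomial `Q(x, T)` in `T`, over an algebra containing `x`. In particular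
`slice Q (0 : k)` is the polynomial `Q(0, T)` cutting out the fibre of `x ^ n * y = Q(x, z)`
over `x = 0`. -/
noncomputable def slice (Q : MvPolynomial (Fin 2) k) (x : R) : R[X] :=
  aeval ![Polynomial.C x, Polynomial.X] Q

theorem slice_zero (Q : MvPolynomial (Fin 2) k) :
    slice Q (0 : R) = aeval ![(0 : R[X]), Polynomial.X] Q := by
  rw [slice, Polynomial.C_0]

theorem map_aeval_pair (φ : R →ₐ[k] S) (Q : MvPolynomial (Fin 2) k) (x z : R) :
    φ (aeval ![x, z] Q) = aeval ![φ x, φ z] Q := by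
  rw [comp_aeval_apply]
  congr! with i
  fin_cases i <;> rfl

theorem aeval_pair_aeval_X_one (P : k[X]) (x z : R) :
    aeval ![x, z] (Polynomial.aeval (X 1 : MvPolynomial (Fin 2) k) P) =
      Polynomial.aeval z P := by
  simp [← Polynomial.aeval_algHom_apply]

theorem slice_aeval_X_one (P : k[X]) (x : k) :
    slice (Polynomial.aeval (X 1 : MvPolynomial (Fin 2) k) P) x = P := by
  rw [slice, aeval_pair_aeval_X_one, Polynomial.aeval_X_left_apply]

variable (Q : MvPolynomial (Fin 2) k) (x a b : R)

theorem eval_slice : (slice Q x).eval a = aeval ![x, a] Q := by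
  have h := map_aeval_pair ((Polynomial.aeval a).restrictScalars k) Q (Polynomial.C x) Polynomial.X
  simpa [slice] using h

theorem C_dvd_slice_sub_map_slice_zero :
    Polynomial.C x ∣ slice Q x - (slice Q (0 : k)).map (algebraMap k R) := by
  let mk := Ideal.Quotient.mkₐ k (Ideal.span {Polynomial.C x})
  have mk_C : mk (Polynomial.C x) = 0 :=
    Ideal.Quotient.eq_zero_iff_mem.mpr (Ideal.mem_span_singleton_self _)
  rw [← Ideal.mem_span_singleton, ← Ideal.Quotient.eq]
  change mk _ = mk (Polynomial.mapAlgHom (Algebra.ofId k R) (slice Q 0))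
  rw [slice, slice, map_aeval_pair, map_aeval_pair, map_aeval_pair, mk_C]
  simp

theorem dvd_aeval_sub_aeval_slice_zero :
    x ∣ aeval ![x, a] Q - Polynomial.aeval a (slice Q (0 : k)) := by
  rw [← eval_slice, ← Polynomial.eval_map_algebraMap, ← Polynomial.eval_sub]
  simpa using Polynomial.eval_dvd (x := a) (C_dvd_slice_sub_map_slice_zero Q x)

theorem dvd_eval_derivative_slice_sub :
    x ∣ (slice Q x).derivative.eval a -
      Polynomial.aeval a (slice Q (0 : k)).derivative := by
  obtain ⟨f, hf⟩ := C_dvd_slice_sub_map_slice_zero Q x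
  rw [← Polynomial.eval_map_algebraMap, ← Polynomial.derivative_map, ← Polynomial.eval_sub,
    ← Polynomial.derivative_sub, hf]
  simp

variable {x a b}

theorem dvd_mul_eval_derivative_slice_sub_one {u v : k[X]}
    (huv : u * slice Q 0 + v * (slice Q 0).derivative = 1)
    (ha : x ∣ Polynomial.aeval a (slice Q (0 : k))) :
    x ∣ Polynomial.aeval a v * (slice Q x).derivative.eval a - 1 := by
  have bezout := congrArg (Polynomial.aeval a) huv
  rw [map_add, map_mul, map_mul, map_one] at bezout
  convert ((dvd_eval_derivative_slice_sub Q x a).mul_left (Polynomial.aeval a v)).sub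
    (ha.mul_left (Polynomial.aeval a u)) using 1
  linear_combination bezout

theorem sub_dvd_aeval_sub_aeval (f : k[X]) (a b : R) :
    a - b ∣ Polynomial.aeval a f - Polynomial.aeval b f := by
  simpa only [Polynomial.eval_map_algebraMap] using
    Polynomial.sub_dvd_eval_sub a b (f.map (algebraMap k R))

theorem sub_dvd_aeval_pair_sub (x a b : R) : a - b ∣ aeval ![x, a] Q - aeval ![x, b] Q := by
  simpa only [eval_slice] using Polynomial.sub_dvd_eval_sub a b (slice Q x)

theorem dvd_aeval_slice_zero_of_pow_dvd {n : ℕ} (hn : n ≠ 0) (h : x ^ n ∣ aeval ![x, a] Q) :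
    x ∣ Polynomial.aeval a (slice Q (0 : k)) :=
  (dvd_iff_dvd_of_dvd_sub (dvd_aeval_sub_aeval_slice_zero Q x a)).mp
    ((dvd_pow_self x hn).trans h)

end Slice

section ApproximateRoots

universe u

variable {k : Type*} [CommRing k] {P : MvPolynomial (Fin 2) k}

theorem exists_approximate_root (hP : (slice P (0 : k)).Separable) (h : k[X]) (m : ℕ) :
    ∃ η : MvPolynomial (Fin 2) k, ∀ {S : Type u} [CommRing S] [Algebra k S] (x z : S),
      x ∣ Polynomial.aeval z ((slice P 0).comp h) →
        x ∣ aeval ![x, z] η - Polynomial.aeval z h ∧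
          x ^ m ∣ aeval ![x, aeval ![x, z] η] P := by
  obtain ⟨u, v, huv⟩ := hP
  induction m with
  | zero =>
    refine ⟨Polynomial.aeval (X 1) h, fun x z _ ↦ ?_⟩
    simp [aeval_pair_aeval_X_one]
  | succ m ih =>
    obtain ⟨η, hη⟩ := ih
    refine ⟨η - Polynomial.aeval η v * aeval ![X 0, η] P, fun {S} _ _ x z hz ↦ ?_⟩
    obtain ⟨hηh, hPη⟩ := hη x z hz
    set r := aeval ![x, z] η
    have newton : aeval ![x, z] (η - Polynomial.aeval η v * aeval ![X 0, η] P) =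
        r - Polynomial.aeval r v * (slice P x).eval r := by
      rw [map_sub, map_mul, ← Polynomial.aeval_algHom_apply, map_aeval_pair, aeval_X, eval_slice,
        Matrix.cons_val_zero]
    have hr : x ∣ Polynomial.aeval r (slice P (0 : k)) := by
      rw [Polynomial.aeval_comp] at hz
      exact (dvd_iff_dvd_of_dvd_sub (hηh.trans (sub_dvd_aeval_sub_aeval _ _ _))).mpr hz
    have hPr : x ∣ (slice P x).eval r := by
      rw [eval_slice]
      exact (dvd_iff_dvd_of_dvd_sub (dvd_aeval_sub_aeval_slice_zero P x r)).mpr hr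
    rw [newton, ← eval_slice]
    constructor
    · rw [sub_right_comm]
      exact hηh.sub (hPr.mul_left _)
    · exact pow_succ_dvd_eval_newton_step _ (dvd_mul_eval_derivative_slice_sub_one P huv hr) hPr
        (by rwa [eval_slice])

theorem pow_dvd_sub_of_pow_dvd_aeval (hP : (slice P (0 : k)).Separable) {R : Type*} [CommRing R]
    [Algebra k R] {x a b : R} {m : ℕ} (hm : m ≠ 0) (hab : x ∣ a - b)
    (ha : x ^ m ∣ aeval ![x, a] P) (hb : x ^ m ∣ aeval ![x, b] P) : x ^ m ∣ a - b := by
  obtain ⟨u, v, huv⟩ := hP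
  have ha' := dvd_aeval_slice_zero_of_pow_dvd P hm ha
  rw [← eval_slice] at ha hb
  exact pow_dvd_sub_of_pow_dvd_eval _ (dvd_mul_eval_derivative_slice_sub_one P huv ha') hab ha hb

end ApproximateRoots

section FiberPair

universe u

variable {k : Type*} [CommRing k] {n m : ℕ} {Q P : MvPolynomial (Fin 2) k} {g h : k[X]}

/-- The points `(x, z₁, z₂)` of Danielewski's fibre product of the hypersurfaces
`x ^ n * y₁ = Q(x, z₁)` and `x ^ m * y₂ = P(x, z₂)` over the affine line with multiple origins.
The map `h` matches the components `Q(0, z₁) = 0` and `P(0, z₂) = 0` of their fibres over `x = 0`.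
The coordinates `y₁` and `y₂` are left out: they are unique where `x` is regular. -/
structure IsFiberPair (n m : ℕ) (Q P : MvPolynomial (Fin 2) k) (h : k[X]) {S : Type u}
    [CommRing S] [Algebra k S] (x z₁ z₂ : S) : Prop where
  pow_dvd_left : x ^ n ∣ aeval ![x, z₁] Q
  pow_dvd_right : x ^ m ∣ aeval ![x, z₂] P
  dvd_sub : x ∣ z₂ - Polynomial.aeval z₁ h

theorem IsFiberPair.symm {S : Type u} [CommRing S] [Algebra k S] {x z₁ z₂ : S} (hn : n ≠ 0)
    (hgh : slice Q 0 ∣ g.comp h - Polynomial.X) (hz : IsFiberPair n m Q P h x z₁ z₂) :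
    IsFiberPair m n P Q g x z₂ z₁ where
  pow_dvd_left := hz.pow_dvd_right
  pow_dvd_right := hz.pow_dvd_left
  dvd_sub := by
    have h₁ : x ∣ Polynomial.aeval (Polynomial.aeval z₁ h) g - z₁ := by
      simpa [Polynomial.aeval_comp] using (dvd_aeval_slice_zero_of_pow_dvd Q hn
        hz.pow_dvd_left).trans (map_dvd (Polynomial.aeval z₁) hgh)
    have h₂ := hz.dvd_sub.trans (sub_dvd_aeval_sub_aeval g _ _)
    rw [dvd_sub_comm]
    simpa using h₂.add h₁

theorem exists_isFiberPair_iff (hn : n ≠ 0) (hm : m ≠ 0) (hP : (slice P (0 : k)).Separable)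
    (hQP : slice Q 0 ∣ (slice P 0).comp h) :
    ∃ η : MvPolynomial (Fin 2) k, ∀ {S : Type u} [CommRing S] [Algebra k S] (x z₁ z₂ : S),
      IsFiberPair n m Q P h x z₁ z₂ ↔
        x ^ n ∣ aeval ![x, z₁] Q ∧ x ^ m ∣ z₂ - aeval ![x, z₁] η := by
  obtain ⟨η, hη⟩ := exists_approximate_root hP h m
  refine ⟨η, fun x z₁ z₂ ↦ ?_⟩
  have root (hz₁ : x ^ n ∣ aeval ![x, z₁] Q) :=
    hη x z₁ ((dvd_aeval_slice_zero_of_pow_dvd Q hn hz₁).trans (map_dvd (Polynomial.aeval z₁) hQP))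
  constructor
  · rintro ⟨hz₁, hz₂, hz⟩
    obtain ⟨hηh, hPη⟩ := root hz₁
    exact ⟨hz₁, pow_dvd_sub_of_pow_dvd_aeval hP hm (by simpa using hz.sub hηh) hz₂ hPη⟩
  · rintro ⟨hz₁, hz⟩
    obtain ⟨hηh, hPη⟩ := root hz₁
    refine ⟨hz₁, ?_, ?_⟩
    · exact (dvd_iff_dvd_of_dvd_sub (hz.trans (sub_dvd_aeval_pair_sub P x _ _))).mpr hPη
    · simpa using ((dvd_pow_self x hm).trans hz).add hηh

/-- `(x, z₁, z₂)` is the universal point of the fibre product `IsFiberPair` among algebras in which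
`x` is regular; this determines the algebra `A`. -/
structure IsUniversalFiberPair (n m : ℕ) (Q P : MvPolynomial (Fin 2) k) (h : k[X])
    {A : Type u} [CommRing A] [Algebra k A] (x z₁ z₂ : A) : Prop where
  isLeftRegular : IsLeftRegular x
  isFiberPair : IsFiberPair n m Q P h x z₁ z₂
  existsUnique_algHom : ∀ {S : Type u} [CommRing S] [Algebra k S] {x' z₁' z₂' : S},
    IsLeftRegular x' → IsFiberPair n m Q P h x' z₁' z₂' →
      ∃! φ : A →ₐ[k] S, φ x = x' ∧ φ z₁ = z₁' ∧ φ z₂ = z₂'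

namespace IsUniversalFiberPair

variable {A B : Type u} [CommRing A] [Algebra k A] [CommRing B] [Algebra k B]
  {x z₁ z₂ : A} {x' z₁' z₂' : B}

theorem symm (hn : n ≠ 0) (hm : m ≠ 0) (hgh : slice Q 0 ∣ g.comp h - Polynomial.X)
    (hhg : slice P 0 ∣ h.comp g - Polynomial.X) (hA : IsUniversalFiberPair n m Q P h x z₁ z₂) :
    IsUniversalFiberPair m n P Q g x z₂ z₁ where
  isLeftRegular := hA.isLeftRegular
  isFiberPair := hA.isFiberPair.symm hn hgh
  existsUnique_algHom hx hz :=
    (existsUnique_congr fun _ ↦ and_congr_right' and_comm).mp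
      (hA.existsUnique_algHom hx (hz.symm hm hhg))

theorem nonempty_algEquiv (hA : IsUniversalFiberPair n m Q P h x z₁ z₂)
    (hB : IsUniversalFiberPair n m Q P h x' z₁' z₂') : Nonempty (A ≃ₐ[k] B) := by
  obtain ⟨φ, ⟨hφx, hφ₁, hφ₂⟩, -⟩ := hA.existsUnique_algHom hB.isLeftRegular hB.isFiberPair
  obtain ⟨ψ, ⟨hψx, hψ₁, hψ₂⟩, -⟩ := hB.existsUnique_algHom hA.isLeftRegular hA.isFiberPair
  exact ⟨AlgEquiv.ofAlgHom φ ψ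
    ((hB.existsUnique_algHom hB.isLeftRegular hB.isFiberPair).unique (by simp [*]) (by simp))
    ((hA.existsUnique_algHom hA.isLeftRegular hA.isFiberPair).unique (by simp [*]) (by simp))⟩

end IsUniversalFiberPair

end FiberPair

section Cylinder

variable {k : Type*} [CommRing k] {n m : ℕ} {Q P : MvPolynomial (Fin 2) k}

/-- The coordinate ring of the cylinder over the hypersurface `x ^ n * y = Q(x, z)`, over an
arbitrary base ring. The variables are ordered as in `DHCylRing`. -/
abbrev CylinderRing (n : ℕ) (Q : MvPolynomial (Fin 2) k) : Type _ :=
  MvPolynomial (Fin 4) k ⧸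
    Ideal.span {(X 0 : MvPolynomial (Fin 4) k) ^ n * X 1 - aeval ![X 0, X 2] Q}

/-- The coordinate functions `x, y, z, w` on the cylinder, in this order. -/
noncomputable abbrev coord (n : ℕ) (Q : MvPolynomial (Fin 2) k) (i : Fin 4) : CylinderRing n Q :=
  Ideal.Quotient.mkₐ k _ (X i)

theorem coord_zero_pow_mul_coord_one (n : ℕ) (Q : MvPolynomial (Fin 2) k) :
    coord n Q 0 ^ n * coord n Q 1 = aeval ![coord n Q 0, coord n Q 2] Q := by
  rw [← map_aeval_pair, ← map_pow, ← map_mul]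
  exact Ideal.Quotient.eq.mpr (Ideal.mem_span_singleton_self _)

theorem isLeftRegular_coord_zero [IsDomain k] (hn : n ≠ 0) (hQ : slice Q (0 : k) ≠ 0) :
    IsLeftRegular (coord n Q 0) := by
  refine isLeftRegular_of_non_zero_divisor _ fun a ha ↦ ?_
  obtain ⟨f, rfl⟩ := Ideal.Quotient.mkₐ_surjective k _ a
  rw [← map_mul] at ha
  obtain ⟨c, hc⟩ := Ideal.mem_span_singleton.mp (Ideal.Quotient.eq_zero_iff_mem.mp ha)
  have prime : Prime (X 0 : MvPolynomial (Fin 4) k) := X_prime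
  have not_dvd : ¬ X 0 ∣ (X 0 : MvPolynomial (Fin 4) k) ^ n * X 1 - aeval ![X 0, X 2] Q := by
    intro hdvd
    have := map_dvd (aeval (![0, 0, Polynomial.X, 0] : Fin 4 → k[X])) hdvd
    rw [map_sub, map_aeval_pair] at this
    exact hQ (by simpa [hn, slice_zero] using this)
  obtain ⟨c, rfl⟩ := (prime.dvd_or_dvd ⟨f, hc.symm⟩).resolve_left not_dvd
  refine Ideal.Quotient.eq_zero_iff_mem.mpr (Ideal.mem_span_singleton.mpr ⟨c, ?_⟩)
  exact mul_left_cancel₀ prime.ne_zero (by rw [hc]; ring)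

variable {S : Type*} [CommRing S] [Algebra k S]

theorem exists_algHom_coord_eq {p : Fin 4 → S}
    (hp : p 0 ^ n * p 1 = aeval ![p 0, p 2] Q) :
    ∃ φ : CylinderRing n Q →ₐ[k] S, ∀ i, φ (coord n Q i) = p i := by
  refine ⟨Ideal.Quotient.liftₐ _ (aeval p) fun a ha ↦ ?_, fun i ↦ aeval_X p i⟩
  obtain ⟨c, rfl⟩ := Ideal.mem_span_singleton.mp ha
  rw [map_mul, map_sub, map_aeval_pair]
  simp [hp]

theorem map_coord_zero_pow_mul_map_coord_one (φ : CylinderRing n Q →ₐ[k] S) :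
    φ (coord n Q 0) ^ n * φ (coord n Q 1) = aeval ![φ (coord n Q 0), φ (coord n Q 2)] Q := by
  rw [← map_pow, ← map_mul, coord_zero_pow_mul_coord_one, map_aeval_pair]

theorem algHom_ext_of_isLeftRegular {φ ψ : CylinderRing n Q →ₐ[k] S}
    (hx : IsLeftRegular (φ (coord n Q 0))) (h₀ : φ (coord n Q 0) = ψ (coord n Q 0))
    (h₂ : φ (coord n Q 2) = ψ (coord n Q 2)) (h₃ : φ (coord n Q 3) = ψ (coord n Q 3)) :
    φ = ψ := by
  have h₁ : φ (coord n Q 1) = ψ (coord n Q 1) := by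
    refine hx.pow n ?_
    change φ (coord n Q 0) ^ n * φ (coord n Q 1) = φ (coord n Q 0) ^ n * ψ (coord n Q 1)
    rw [map_coord_zero_pow_mul_map_coord_one, h₀, h₂, map_coord_zero_pow_mul_map_coord_one]
  refine Ideal.Quotient.algHom_ext _ (MvPolynomial.algHom_ext fun i ↦ ?_)
  fin_cases i
  exacts [h₀, h₁, h₂, h₃]

theorem exists_isUniversalFiberPair [IsDomain k] (hn : n ≠ 0) (hm : m ≠ 0)
    (hQ : slice Q (0 : k) ≠ 0) (hP : (slice P (0 : k)).Separable) {h : k[X]}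
    (hQP : slice Q 0 ∣ (slice P 0).comp h) :
    ∃ z₂, IsUniversalFiberPair n m Q P h (coord n Q 0) (coord n Q 2) z₂ := by
  obtain ⟨η, hη⟩ := exists_isFiberPair_iff hn hm hP hQP
  set x := coord n Q 0
  set z := coord n Q 2
  set w := coord n Q 3
  have hz : x ^ n ∣ aeval ![x, z] Q := ⟨_, (coord_zero_pow_mul_coord_one n Q).symm⟩
  refine ⟨aeval ![x, z] η + x ^ m * w, isLeftRegular_coord_zero hn hQ,
    (hη x z _).mpr ⟨hz, by simp⟩, ?_⟩
  intro S _ _ x' z₁' z₂' hx' hz'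
  obtain ⟨⟨y', hy'⟩, w', hw'⟩ := (hη x' z₁' z₂').mp hz'
  obtain ⟨φ, hφ⟩ := exists_algHom_coord_eq (p := ![x', y', z₁', w']) hy'.symm
  have φ_x : φ x = x' := hφ 0
  have φ_z : φ z = z₁' := hφ 2
  have φ_w : φ w = w' := hφ 3
  refine ⟨φ, ⟨φ_x, φ_z, ?_⟩, ?_⟩
  · rw [map_add, map_mul, map_pow, map_aeval_pair, φ_x, φ_z, φ_w, ← hw', add_sub_cancel]
  · rintro ψ ⟨ψ_x, ψ_z, hψ⟩
    rw [map_add, map_mul, map_pow, map_aeval_pair, ψ_x, ψ_z, ← eq_sub_iff_add_eq', hw'] at hψ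
    refine algHom_ext_of_isLeftRegular (ψ_x ▸ hx') (ψ_x.trans φ_x.symm) (ψ_z.trans φ_z.symm) ?_
    exact (hx'.pow m hψ).trans φ_w.symm

end Cylinder

end Danielewski

open Danielewski in
theorem cylinder_over_Danielewski_hypersurface_isomorphic_to_classical_general
    {k : Type*} [CommRing k] [IsDomain k] {n m : ℕ} (hn : n ≠ 0) (hm : m ≠ 0)
    {Q P : MvPolynomial (Fin 2) k} (hQ : (slice Q (0 : k)).Separable)
    (hP : (slice P (0 : k)).Separable)
    (e : AdjoinRoot (slice Q (0 : k)) ≃ₐ[k] AdjoinRoot (slice P (0 : k))) :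
    Nonempty (CylinderRing n Q ≃ₐ[k] CylinderRing m P) := by
  obtain ⟨g, h, hQP, hPQ, hgh, hhg⟩ := exists_comp_of_adjoinRoot_algEquiv e
  obtain ⟨_, hA⟩ := exists_isUniversalFiberPair hn hm hQ.ne_zero hP hQP
  obtain ⟨_, hB⟩ := exists_isUniversalFiberPair hm hn hP.ne_zero hQ hPQ
  exact hA.nonempty_algEquiv (hB.symm hm hn hhg hgh)

theorem cylinder_over_Danielewski_hypersurface_isomorphic_to_classical
    (n : ℕ) (hn : 1 ≤ n) (d : ℕ) (hd : 2 ≤ d)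
    (Q : MvPolynomial (Fin 2) ℂ)
    -- Q(0,z) ∈ ℂ[z] has degree d and only simple roots
    (hQdeg : (MvPolynomial.aeval ![(0 : Polynomial ℂ), Polynomial.X] Q).natDegree = d)
    (hQsf : Squarefree (MvPolynomial.aeval ![(0 : Polynomial ℂ), Polynomial.X] Q))
    (P : Polynomial ℂ)
    -- P is monic of degree d with only simple roots
    (hPmonic : P.Monic) (hPdeg : P.natDegree = d) (hPsf : Squarefree P) :
    Nonempty (DHCylRing n Q ≃ₐ[ℂ] WCylRing P) := by
  have hP := Danielewski.slice_aeval_X_one P (0 : ℂ)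
  rw [← Danielewski.slice_zero] at hQdeg hQsf
  have hQsep := PerfectField.separable_iff_squarefree.mpr hQsf
  have hPsep := PerfectField.separable_iff_squarefree.mpr hPsf
  obtain ⟨e⟩ := Danielewski.nonempty_adjoinRoot_algEquiv_of_natDegree_eq hQsep
    (IsAlgClosed.splits _) hPsep (IsAlgClosed.splits _) (hQdeg.trans hPdeg.symm)
  obtain ⟨f⟩ := cylinder_over_Danielewski_hypersurface_isomorphic_to_classical_general
    (Nat.one_le_iff_ne_zero.mp hn) one_ne_zero hQsep (hP.symm ▸ hPsep) (hP.symm ▸ e)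
  refine ⟨f.trans (Ideal.quotientEquivAlgOfEq ℂ ?_)⟩
  rw [Danielewski.aeval_pair_aeval_X_one, pow_one]
end

section
/- Let g(Z) = Z − (Z² − 1)·(Z/2) ∈ ℂ[Z]. The ℂ-algebra endomorphism of ℂ[X,Y,Z,W] determined by X ↦ X, Y ↦ X²W² + 2W·g(Z) + Y²((1/4)Z² − 1), Z ↦ X²W + g(Z), W ↦ −XW + (1/2)ZY sends the polynomial X²Y − Z² + 1 to an element of the ideal generated by XY − Z² + 1; hence it descends to a ℂ-algebra homomorphism ℂ[X,Y,Z,W]/(X²Y − Z² + 1) → ℂ[X,Y,Z,W]/(XY − Z² + 1). -/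
open MvPolynomial

/-- The polynomial ring `ℂ[X,Y,Z,W]` with `X 0 = X`, `X 1 = Y`, `X 2 = Z`, `X 3 = W`. -/
abbrev R4 : Type := MvPolynomial (Fin 4) ℂ

/-- `g(Z) = Z - (Z² - 1)·(Z/2)`. -/
noncomputable def russellg : R4 := X 2 - (X 2 ^ 2 - 1) * (C (1 / 2 : ℂ) * X 2)

/-- The ℂ-algebra endomorphism ψ of `ℂ[X,Y,Z,W]` given by
`X ↦ X`, `Y ↦ X²W² + 2W·g(Z) + Y²((1/4)Z² − 1)`, `Z ↦ X²W + g(Z)`, `W ↦ −XW + (1/2)ZY`. -/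
noncomputable def russellPsi : R4 →ₐ[ℂ] R4 :=
  MvPolynomial.aeval
    ![X 0,
      X 0 ^ 2 * X 3 ^ 2 + 2 * X 3 * russellg + X 1 ^ 2 * (C (1 / 4 : ℂ) * X 2 ^ 2 - 1),
      X 0 ^ 2 * X 3 + russellg,
      -(X 0 * X 3) + C (1 / 2 : ℂ) * X 2 * X 1]

/-!
Put `q = Z²/4 - 1`. Since `g` fixes its critical points `±1`, the polynomial `g² - 1` is divisible
by `(Z² - 1)²`, with quotient `q`. Completing the square removes `W`, so `X²Y - Z² + 1` is sent to
`X²Y²q - (g² - 1) = ((XY)² - (Z² - 1)²) q`, a difference of squares with `XY - Z² + 1` as a factor.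
-/

section CommRing

variable {A : Type*} [CommRing A]

theorem sub_mul_half_sq_sub_one {c : A} (hc : 2 * c = 1) (z : A) :
    (z - (z ^ 2 - 1) * (c * z)) ^ 2 - 1 = (z ^ 2 - 1) ^ 2 * (c ^ 2 * z ^ 2 - 1) := by
  linear_combination -(z ^ 2 - 1) * z ^ 2 * hc

theorem russell_relation_eq_mul {g q z : A} (hgq : g ^ 2 - 1 = (z ^ 2 - 1) ^ 2 * q) (x y w : A) :
    x ^ 2 * (x ^ 2 * w ^ 2 + 2 * w * g + y ^ 2 * q) - (x ^ 2 * w + g) ^ 2 + 1 =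
      (x * y + (z ^ 2 - 1)) * q * (x * y - z ^ 2 + 1) :=
  calc
    _ = (x * y) ^ 2 * q - (g ^ 2 - 1) := by ring
    _ = ((x * y) ^ 2 - (z ^ 2 - 1) ^ 2) * q := by rw [hgq]; ring
    _ = (x * y + (z ^ 2 - 1)) * q * (x * y - z ^ 2 + 1) := by ring

end CommRing

section Endomorphism

variable {R : Type*} [CommRing R]

/-- The endomorphism `X ↦ X`, `Y ↦ X²W² + 2Wg + Y²q`, `Z ↦ X²W + g`, `W ↦ v` of `R[X,Y,Z,W]`.
It generalizes `russellPsi`, keeping the shape of the first three images but leaving `g`, `q` and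
the image `v` of `W` arbitrary. -/
noncomputable def russellEnd (g q v : MvPolynomial (Fin 4) R) :
    MvPolynomial (Fin 4) R →ₐ[R] MvPolynomial (Fin 4) R :=
  aeval ![X 0, X 0 ^ 2 * X 3 ^ 2 + 2 * X 3 * g + X 1 ^ 2 * q, X 0 ^ 2 * X 3 + g, v]

theorem russellEnd_relation_eq_mul {g q : MvPolynomial (Fin 4) R}
    (hgq : g ^ 2 - 1 = (X 2 ^ 2 - 1) ^ 2 * q) (v : MvPolynomial (Fin 4) R) :
    russellEnd g q v (X 0 ^ 2 * X 1 - X 2 ^ 2 + 1) =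
      (X 0 * X 1 + (X 2 ^ 2 - 1)) * q * (X 0 * X 1 - X 2 ^ 2 + 1) := by
  simpa only [russellEnd, map_add, map_sub, map_mul, map_pow, map_one, aeval_X, Matrix.cons_val]
    using russell_relation_eq_mul hgq (X 0) (X 1) (X 3)

theorem russellPsi_maps_relation_and_descends_general {g q : MvPolynomial (Fin 4) R}
    (hgq : g ^ 2 - 1 = (X 2 ^ 2 - 1) ^ 2 * q) (v : MvPolynomial (Fin 4) R) :
    russellEnd g q v (X 0 ^ 2 * X 1 - X 2 ^ 2 + 1) ∈ Ideal.span {X 0 * X 1 - X 2 ^ 2 + 1} ∧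
    ∃ Ψ : (MvPolynomial (Fin 4) R ⧸ Ideal.span {X 0 ^ 2 * X 1 - X 2 ^ 2 + 1}) →ₐ[R]
          (MvPolynomial (Fin 4) R ⧸ Ideal.span {X 0 * X 1 - X 2 ^ 2 + 1}),
      ∀ p, Ψ (Ideal.Quotient.mk _ p) = Ideal.Quotient.mk _ (russellEnd g q v p) := by
  have relation_mem : russellEnd g q v (X 0 ^ 2 * X 1 - X 2 ^ 2 + 1) ∈
      Ideal.span {X 0 * X 1 - X 2 ^ 2 + 1} :=
    Ideal.mem_span_singleton'.mpr ⟨_, (russellEnd_relation_eq_mul hgq v).symm⟩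
  have span_le_comap : Ideal.span {X 0 ^ 2 * X 1 - X 2 ^ 2 + 1} ≤
      (Ideal.span {X 0 * X 1 - X 2 ^ 2 + 1}).comap (russellEnd g q v) :=
    (Ideal.span_singleton_le_iff_mem _).mpr relation_mem
  exact ⟨relation_mem, Ideal.quotientMapₐ _ _ span_le_comap,
    fun _ => Ideal.quotientMap_mk (H := span_le_comap)⟩

end Endomorphism

theorem russellg_sq_sub_one :
    russellg ^ 2 - 1 = (X 2 ^ 2 - 1) ^ 2 * (C (1 / 4 : ℂ) * X 2 ^ 2 - 1) := by
  have two_mul_half : (2 : R4) * C (1 / 2 : ℂ) = 1 := by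
    rw [← map_ofNat (C : ℂ →+* R4) 2, ← C_mul, mul_one_div_cancel two_ne_zero, C_1]
  have half_sq : C (1 / 2 : ℂ) ^ 2 = (C (1 / 4 : ℂ) : R4) := by
    rw [← C_pow]
    norm_num
  rw [russellg, sub_mul_half_sq_sub_one two_mul_half, half_sq]

theorem russellPsi_maps_relation_and_descends :
    russellPsi ((X 0 : R4) ^ 2 * X 1 - X 2 ^ 2 + 1) ∈
      Ideal.span {(X 0 : R4) * X 1 - X 2 ^ 2 + 1} ∧
    ∃ Ψ : (R4 ⧸ Ideal.span {(X 0 : R4) ^ 2 * X 1 - X 2 ^ 2 + 1}) →ₐ[ℂ]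
          (R4 ⧸ Ideal.span {(X 0 : R4) * X 1 - X 2 ^ 2 + 1}),
      ∀ p : R4,
        Ψ (Ideal.Quotient.mk (Ideal.span {(X 0 : R4) ^ 2 * X 1 - X 2 ^ 2 + 1}) p) =
          Ideal.Quotient.mk (Ideal.span {(X 0 : R4) * X 1 - X 2 ^ 2 + 1}) (russellPsi p) :=
  russellPsi_maps_relation_and_descends_general russellg_sq_sub_one _
end

section
/- Let n, m, d ≥ 1 be integers, let b_1,…,b_d ∈ ℂ be pairwise distinct, let a_1,…,a_d ∈ ℂ, and set Q(z) = ∏_{i=1}^d (z − b_i). Suppose f, g ∈ ℂ[z] satisfy f(b_i) = a_i for all i, g(a_i) = b_i for all i, and g^{(k)}(a_i) = 0 for all i and all 1 ≤ k ≤ m−1. Then in the polynomial ring ℂ[X,Z,W], the polynomial Z − g(f(Z) + X^n W) belongs to the ideal generated by Q(Z) and X^m. -/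
open MvPolynomial

/-!
By Taylor's formula `g (f Z + v) = ∑ k, (D k g) (f Z) * v ^ k` with `D k` the `k`-th Hasse
derivative. Modulo `Q` a polynomial in `Z` depends only on its values at the `b i`, and there
`Z - g (f Z)` and `(D k g) (f Z)`, for `0 < k < m`, vanish. The terms with `k ≥ m` are divisible by
`v ^ m`, which for `v = X ^ n * W` is a multiple of `X ^ m`.
-/

section

open scoped Polynomial

theorem map_hasseDeriv {R S : Type*} [Semiring R] [Semiring S] (φ : R →+* S) (k : ℕ) (p : R[X]) :
    (p.hasseDeriv k).map φ = (p.map φ).hasseDeriv k := by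
  ext j
  simp [Polynomial.hasseDeriv_coeff]

theorem eval_hasseDeriv_eq_zero {R : Type*} [Semiring R] [IsAddTorsionFree R] {p : R[X]} {k : ℕ}
    {x : R} (h : (Polynomial.derivative^[k] p).eval x = 0) : (p.hasseDeriv k).eval x = 0 := by
  rw [← Polynomial.factorial_smul_hasseDeriv, LinearMap.smul_apply, Polynomial.eval_smul] at h
  exact (smul_eq_zero_iff_right k.factorial_ne_zero).mp h

theorem prod_X_sub_C_dvd_of_eval_eq_zero {R ι : Type*} [CommRing R] [IsDomain R] [Fintype ι]
    {b : ι → R} (hb : Function.Injective b) {p : R[X]} (hp : ∀ i, p.eval (b i) = 0) :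
    ∏ i, (Polynomial.X - Polynomial.C (b i)) ∣ p := by
  rcases eq_or_ne p 0 with rfl | hp0
  · exact dvd_zero _
  have hroots : Finset.univ.val.map b ≤ p.roots := by
    refine (Multiset.le_iff_subset (Finset.univ.nodup.map hb)).mpr fun x hx => ?_
    obtain ⟨i, -, rfl⟩ := Multiset.mem_map.mp hx
    exact (Polynomial.mem_roots hp0).mpr (hp i)
  simpa only [Multiset.map_map, Function.comp_def, Finset.prod_eq_multiset_prod] using
    (Multiset.prod_X_sub_C_dvd_iff_le_roots hp0 _).mpr hroots

section Ideal

variable {A : Type*} [CommRing A] {I : Ideal A}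

theorem pow_mul_pow_mem {x : A} {m n : ℕ} (hx : x ^ m ∈ I) (hn : 0 < n) (y : A) :
    (x ^ n * y) ^ m ∈ I := by
  rw [mul_pow, pow_right_comm]
  exact I.mul_mem_right _ (I.pow_mem_of_mem hx n hn)

theorem eval_sub_coeff_zero_mem {p : A[X]} {v : A} {m : ℕ}
    (hp : ∀ k, 0 < k → k < m → p.coeff k ∈ I) (hv : v ^ m ∈ I) : p.eval v - p.coeff 0 ∈ I := by
  rw [Polynomial.eval_eq_sum_range, Finset.sum_range_succ', pow_zero, mul_one, add_sub_cancel_right]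
  refine I.sum_mem fun k _ => ?_
  rcases lt_or_ge (k + 1) m with hk | hk
  · exact I.mul_mem_right _ (hp (k + 1) k.succ_pos hk)
  · exact I.mul_mem_left _ (I.pow_mem_of_pow_mem hv hk)

variable {R : Type*} [CommRing R] [Algebra R A]

theorem aeval_add_sub_aeval_mem {g : R[X]} {u v : A} {m : ℕ}
    (hg : ∀ k, 0 < k → k < m → Polynomial.aeval u (g.hasseDeriv k) ∈ I) (hv : v ^ m ∈ I) :
    Polynomial.aeval (u + v) g - Polynomial.aeval u g ∈ I := by
  have htaylor (k : ℕ) : ((g.map (algebraMap R A)).taylor u).coeff k =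
      Polynomial.aeval u (g.hasseDeriv k) := by
    rw [Polynomial.taylor_coeff, ← map_hasseDeriv, Polynomial.eval_map_algebraMap]
  have hmem := eval_sub_coeff_zero_mem (fun k h0 hk => htaylor k ▸ hg k h0 hk) hv
  rwa [Polynomial.taylor_eval, Polynomial.taylor_coeff_zero, Polynomial.eval_map_algebraMap,
    Polynomial.eval_map_algebraMap, add_comm v u] at hmem

theorem slice_is_regular_membership_general [IsDomain R] {ι : Type*} [Fintype ι] {m : ℕ}
    {a b : ι → R} (hb : Function.Injective b) {f g : R[X]} (hf : ∀ i, f.eval (b i) = a i)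
    (hg0 : ∀ i, g.eval (a i) = b i)
    (hg : ∀ i k, 0 < k → k < m → (g.hasseDeriv k).eval (a i) = 0) {z v : A}
    (hz : Polynomial.aeval z (∏ i, (Polynomial.X - Polynomial.C (b i))) ∈ I) (hv : v ^ m ∈ I) :
    z - Polynomial.aeval (Polynomial.aeval z f + v) g ∈ I := by
  have mem_of_eval_eq_zero {p : R[X]} (hp : ∀ i, p.eval (b i) = 0) : Polynomial.aeval z p ∈ I :=
    I.mem_of_dvd (map_dvd _ (prod_X_sub_C_dvd_of_eval_eq_zero hb hp)) hz
  have hzero : z - Polynomial.aeval (Polynomial.aeval z f) g ∈ I := by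
    have hmem : Polynomial.aeval z (Polynomial.X - g.comp f) ∈ I :=
      mem_of_eval_eq_zero fun i => by simp [Polynomial.eval_comp, hf, hg0]
    rwa [map_sub, Polynomial.aeval_X, Polynomial.aeval_comp] at hmem
  have hhigher : Polynomial.aeval (Polynomial.aeval z f + v) g -
      Polynomial.aeval (Polynomial.aeval z f) g ∈ I := by
    refine aeval_add_sub_aeval_mem (fun k h0 hk => ?_) hv
    rw [← Polynomial.aeval_comp]
    exact mem_of_eval_eq_zero fun i => by rw [Polynomial.eval_comp, hf, hg i k h0 hk]
  simpa only [sub_sub_sub_cancel_right] using I.sub_mem hzero hhigher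

end Ideal

end

theorem slice_is_regular_membership (n m d : ℕ) (hn : 1 ≤ n) (hm : 1 ≤ m) (hd : 1 ≤ d)
    (b : Fin d → ℂ) (hb : Function.Injective b) (a : Fin d → ℂ)
    (Q : Polynomial ℂ)
    (hQ : Q = ∏ i, (Polynomial.X - Polynomial.C (b i)))
    (f g : Polynomial ℂ)
    (hf : ∀ i, f.eval (b i) = a i)
    (hg0 : ∀ i, g.eval (a i) = b i)
    (hg1 : ∀ i, ∀ k, 1 ≤ k → k ≤ m - 1 → (Polynomial.derivative^[k] g).eval (a i) = 0) :
    -- in ℂ[X,Z,W] (with X = X 0, Z = X 1, W = X 2), the polynomial Z − g(f(Z) + Xⁿ·W)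
    -- lies in the ideal (Q(Z), Xᵐ)
    (X 1 : MvPolynomial (Fin 3) ℂ) -
        Polynomial.aeval
          (Polynomial.aeval (X 1 : MvPolynomial (Fin 3) ℂ) f + (X 0) ^ n * X 2) g ∈
      Ideal.span {Polynomial.aeval (X 1 : MvPolynomial (Fin 3) ℂ) Q,
        (X 0 : MvPolynomial (Fin 3) ℂ) ^ m} := by
  subst hQ
  exact slice_is_regular_membership_general hb hf hg0
    (fun i k h0 hk => eval_hasseDeriv_eq_zero (hg1 i k h0 (Nat.le_sub_one_of_lt hk)))
    (Ideal.subset_span (by simp)) (pow_mul_pow_mem (Ideal.subset_span (by simp)) hn _)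
end

section
/- Let n, m, d ≥ 1 be integers, let a_1,…,a_d ∈ ℂ be pairwise distinct, let b_1,…,b_d ∈ ℂ, and set P(z) = ∏_{i=1}^d (z − a_i) and Q(z) = ∏_{i=1}^d (z − b_i). Suppose g ∈ ℂ[z] satisfies g(a_i) = b_i for all i and g^{(k)}(a_i) = 0 for all i and all 1 ≤ k ≤ m−1. Then in the polynomial ring ℂ[X,Y,Z,W], the polynomial Q(g(Z) + X^m W) belongs to the ideal generated by X^m and X^n Y − P(Z). -/
open MvPolynomial

/-!
The Taylor expansion of `g` at `aᵢ` shows that `(z - aᵢ) ^ m ∣ g - bᵢ`, so taking the product over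
`i` gives `P ^ m ∣ Q ∘ g`. Modulo the ideal, `P(Z) ^ m ≡ (X ^ n * Y) ^ m ≡ 0`, because `n ≥ 1` makes
`X ^ m` divide `X ^ (n * m)`. Hence `Q(g(Z) + X ^ m * W) ≡ Q(g(Z)) ≡ 0`.
-/

section

open scoped Polynomial

variable {R : Type*} [CommRing R]

theorem X_sub_C_pow_dvd_iff_eval_hasseDeriv {p : R[X]} {t : R} {m : ℕ} :
    (Polynomial.X - Polynomial.C t) ^ m ∣ p ↔
      ∀ k < m, (Polynomial.hasseDeriv k p).eval t = 0 := by
  simp only [Polynomial.X_sub_C_pow_dvd_iff, Polynomial.X_pow_dvd_iff, ← Polynomial.taylor_apply,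
    Polynomial.taylor_coeff]

theorem X_sub_C_pow_dvd_iff_eval_iterate_derivative [IsAddTorsionFree R] {p : R[X]} {t : R}
    {m : ℕ} :
    (Polynomial.X - Polynomial.C t) ^ m ∣ p ↔
      ∀ k < m, (Polynomial.derivative^[k] p).eval t = 0 := by
  simp only [X_sub_C_pow_dvd_iff_eval_hasseDeriv, ← Polynomial.factorial_smul_hasseDeriv,
    LinearMap.smul_apply, Polynomial.eval_smul, smul_eq_zero, Nat.factorial_ne_zero, false_or]

theorem X_sub_C_pow_dvd_sub_C_eval [IsAddTorsionFree R] {g : R[X]} {t : R} {m : ℕ}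
    (hg : ∀ k, 1 ≤ k → k < m → (Polynomial.derivative^[k] g).eval t = 0) :
    (Polynomial.X - Polynomial.C t) ^ m ∣ g - Polynomial.C (g.eval t) := by
  refine X_sub_C_pow_dvd_iff_eval_iterate_derivative.2 fun k hk => ?_
  rcases Nat.eq_zero_or_pos k with rfl | hpos
  · simp
  · rw [Polynomial.iterate_derivative_sub, Polynomial.iterate_derivative_C hpos, sub_zero,
      hg k hpos hk]

theorem prod_X_sub_C_pow_dvd_prod_X_sub_C_comp [IsAddTorsionFree R] {ι : Type*} (s : Finset ι)
    {a : ι → R} {g : R[X]} {m : ℕ}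
    (hg : ∀ i ∈ s, ∀ k, 1 ≤ k → k < m → (Polynomial.derivative^[k] g).eval (a i) = 0) :
    (∏ i ∈ s, (Polynomial.X - Polynomial.C (a i))) ^ m ∣
      (∏ i ∈ s, (Polynomial.X - Polynomial.C (g.eval (a i)))).comp g := by
  simp only [Polynomial.prod_comp, ← Finset.prod_pow, Polynomial.sub_comp, Polynomial.X_comp,
    Polynomial.C_comp]
  exact Finset.prod_dvd_prod_of_dvd _ _ fun i hi => X_sub_C_pow_dvd_sub_C_eval (hg i hi)

variable {A : Type*} [CommRing A] [Algebra R A] {I : Ideal A}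

theorem aeval_smodEq_aeval {u v : A} (h : u ≡ v [SMOD I]) (p : R[X]) :
    Polynomial.aeval u p ≡ Polynomial.aeval v p [SMOD I] := by
  simpa only [Polynomial.eval_map_algebraMap] using h.eval (p.map (algebraMap R A))

theorem aeval_aeval_mem_of_pow_dvd_comp {P Q g : R[X]} {m : ℕ} (hdvd : P ^ m ∣ Q.comp g) {z : A}
    (hP : Polynomial.aeval z P ^ m ∈ I) :
    Polynomial.aeval (Polynomial.aeval z g) Q ∈ I := by
  rw [← Polynomial.aeval_comp]
  exact I.mem_of_dvd (map_dvd (Polynomial.aeval z) hdvd) (by rwa [map_pow])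

theorem pow_mem_of_pow_mul_sub_mem {x y r : A} {n m : ℕ} (hn : n ≠ 0) (hx : x ^ m ∈ I)
    (hr : x ^ n * y - r ∈ I) : r ^ m ∈ I := by
  have hxy : (x ^ n * y) ^ m ∈ I := by
    rw [mul_pow, pow_right_comm]
    exact I.mul_mem_right _ (I.pow_mem_of_mem hx n (Nat.pos_of_ne_zero hn))
  exact (I.sub_mem_iff_right hxy).1 (SModEq.sub_mem.1 ((SModEq.sub_mem.2 hr).pow m))

theorem Q_of_new_coordinate_membership_general [IsAddTorsionFree R] {ι : Type*} [Fintype ι]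
    {n m : ℕ} (hn : n ≠ 0) {a b : ι → R} {g : R[X]} (hg0 : ∀ i, g.eval (a i) = b i)
    (hg1 : ∀ i, ∀ k, 1 ≤ k → k < m → (Polynomial.derivative^[k] g).eval (a i) = 0)
    (x y z w : A) :
    Polynomial.aeval (Polynomial.aeval z g + x ^ m * w)
        (∏ i, (Polynomial.X - Polynomial.C (b i))) ∈
      Ideal.span {x ^ m,
        x ^ n * y - Polynomial.aeval z (∏ i, (Polynomial.X - Polynomial.C (a i)))} := by
  obtain rfl : (fun i => g.eval (a i)) = b := funext hg0
  set P := ∏ i, (Polynomial.X - Polynomial.C (a i))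
  set Q := ∏ i, (Polynomial.X - Polynomial.C (g.eval (a i)))
  set I := Ideal.span {x ^ m, x ^ n * y - Polynomial.aeval z P}
  have hx : x ^ m ∈ I := Ideal.subset_span (Set.mem_insert _ _)
  have hxy : x ^ n * y - Polynomial.aeval z P ∈ I := Ideal.subset_span (Set.mem_insert_of_mem _ rfl)
  have hdvd : P ^ m ∣ Q.comp g :=
    prod_X_sub_C_pow_dvd_prod_X_sub_C_comp Finset.univ fun i _ => hg1 i
  have hPm : Polynomial.aeval z P ^ m ∈ I := pow_mem_of_pow_mul_sub_mem hn hx hxy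
  have hQg : Polynomial.aeval (Polynomial.aeval z g) Q ∈ I :=
    aeval_aeval_mem_of_pow_dvd_comp hdvd hPm
  have hcongr : Polynomial.aeval z g + x ^ m * w ≡ Polynomial.aeval z g [SMOD I] := by
    simpa only [SModEq.sub_mem, add_sub_cancel_left] using I.mul_mem_right w hx
  exact SModEq.zero.1 ((aeval_smodEq_aeval hcongr Q).trans (SModEq.zero.2 hQg))

end

theorem Q_of_new_coordinate_membership (n m d : ℕ) (hn : 1 ≤ n) (hm : 1 ≤ m) (hd : 1 ≤ d)
    (a : Fin d → ℂ) (ha : Function.Injective a) (b : Fin d → ℂ)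
    (P Q : Polynomial ℂ)
    (hP : P = ∏ i, (Polynomial.X - Polynomial.C (a i)))
    (hQ : Q = ∏ i, (Polynomial.X - Polynomial.C (b i)))
    (g : Polynomial ℂ)
    (hg0 : ∀ i, g.eval (a i) = b i)
    (hg1 : ∀ i, ∀ k, 1 ≤ k → k ≤ m - 1 → (Polynomial.derivative^[k] g).eval (a i) = 0) :
    -- in ℂ[X,Y,Z,W] (with X = X 0, Y = X 1, Z = X 2, W = X 3), the polynomial
    -- Q(g(Z) + Xᵐ·W) lies in the ideal (Xᵐ, Xⁿ·Y − P(Z))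
    Polynomial.aeval
        (Polynomial.aeval (X 2 : MvPolynomial (Fin 4) ℂ) g + (X 0) ^ m * X 3) Q ∈
      Ideal.span {(X 0 : MvPolynomial (Fin 4) ℂ) ^ m,
        (X 0 : MvPolynomial (Fin 4) ℂ) ^ n * X 1 -
          Polynomial.aeval (X 2 : MvPolynomial (Fin 4) ℂ) P} := by
  subst hP hQ
  exact Q_of_new_coordinate_membership_general (Nat.one_le_iff_ne_zero.1 hn) hg0
    (fun i k hk hkm => hg1 i k hk (Nat.le_sub_one_of_lt hkm)) _ _ _ _
end

section
/- Let n ≥ 1 and d ≥ 1 be integers, let r_1,…,r_d ∈ ℂ be pairwise distinct, and let σ_1,…,σ_d ∈ ℂ[x] be polynomials each of degree strictly less than n. Then there exists a polynomial g ∈ ℂ[x,t] such that for every 1 ≤ i ≤ d, the congruence g(x, r_i + x·t) ≡ σ_i(x) mod (x^n) holds in ℂ[x,t], i.e., g(x, r_i + x·t) − σ_i(x) belongs to the ideal of ℂ[x,t] generated by x^n. -/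
open MvPolynomial

/-!
The substitution `t ↦ rᵢ + x·t` sends `t - rᵢ` to `x·t`, so it turns a congruence modulo
`(t - rᵢ)ⁿ` into one modulo `xⁿ`, and it fixes `σᵢ(x)`. It therefore suffices that
`g ≡ σᵢ(x) mod (t - rᵢ)ⁿ` for all `i`, which the Chinese remainder theorem provides because the
`t - rᵢ` are pairwise coprime.
-/

section Algebra

variable {R A : Type*} [CommRing R] [CommRing A] [Algebra R A]

theorem isCoprime_sub_algebraMap_of_isUnit_sub {r s : R} (h : IsUnit (r - s)) (a : A) :
    IsCoprime (a - algebraMap R A r) (a - algebraMap R A s) := by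
  simpa only [AlgHom.toRingHom_eq_coe, RingHom.coe_coe, map_sub, Polynomial.aeval_X,
    Polynomial.aeval_C] using
    (Polynomial.isCoprime_X_sub_C_of_isUnit_sub h).map (Polynomial.aeval a).toRingHom

theorem exists_forall_sub_algebraMap_pow_dvd_sub {ι : Type*} [Finite ι] {r : ι → R}
    (hr : Pairwise fun i j => IsUnit (r i - r j)) (a : A) (n : ι → ℕ) (f : ι → A) :
    ∃ g : A, ∀ i, (a - algebraMap R A (r i)) ^ n i ∣ g - f i := by
  simp only [← Ideal.mem_span_singleton]
  exact Ideal.exists_forall_sub_mem_ideal (fun i j hij =>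
    (Ideal.isCoprime_span_singleton_iff _ _).mpr
      (isCoprime_sub_algebraMap_of_isUnit_sub (hr hij) a).pow) f

theorem pow_dvd_map_of_sub_algebraMap_pow_dvd {B : Type*} [CommRing B] [Algebra R B]
    (φ : A →ₐ[R] B) {r : R} {a f : A} {b : B} {n : ℕ} (hb : b ∣ φ a - algebraMap R B r)
    (hf : (a - algebraMap R A r) ^ n ∣ f) : b ^ n ∣ φ f :=
  calc b ^ n ∣ (φ a - algebraMap R B r) ^ n := pow_dvd_pow_of_dvd hb n
    _ = φ ((a - algebraMap R A r) ^ n) := by rw [map_pow, map_sub, AlgHom.commutes]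
    _ ∣ φ f := map_dvd φ hf

end Algebra

theorem exists_interpolating_polynomial_mod_xn_general {R ι : Type*} [CommRing R] [Finite ι]
    (n : ι → ℕ) (r : ι → R) (hr : Pairwise fun i j => IsUnit (r i - r j))
    (σ : ι → Polynomial R) :
    ∃ g : MvPolynomial (Fin 2) R, ∀ i,
      aeval ![(X 0 : MvPolynomial (Fin 2) R), C (r i) + X 0 * X 1] g -
          Polynomial.aeval (X 0 : MvPolynomial (Fin 2) R) (σ i) ∈
        Ideal.span {(X 0 : MvPolynomial (Fin 2) R) ^ n i} := by
  obtain ⟨g, hg⟩ := exists_forall_sub_algebraMap_pow_dvd_sub hr (X 1 : MvPolynomial (Fin 2) R) n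
    fun i => Polynomial.aeval (X 0) (σ i)
  refine ⟨g, fun i => Ideal.mem_span_singleton.mpr ?_⟩
  set φ := aeval (R := R) ![(X 0 : MvPolynomial (Fin 2) R), C (r i) + X 0 * X 1]
  have hX : (X 0 : MvPolynomial (Fin 2) R) ∣ φ (X 1) - algebraMap R _ (r i) := by
    simp [φ, algebraMap_eq]
  have hσ : φ (Polynomial.aeval (X 0) (σ i)) = Polynomial.aeval (X 0) (σ i) := by
    rw [← Polynomial.aeval_algHom_apply, aeval_X, Matrix.cons_val_zero]
  simpa only [map_sub, hσ] using pow_dvd_map_of_sub_algebraMap_pow_dvd φ hX (hg i)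

theorem exists_interpolating_polynomial_mod_xn (n d : ℕ) (hn : 1 ≤ n) (hd : 1 ≤ d)
    (r : Fin d → ℂ) (hr : Function.Injective r)
    (σ : Fin d → Polynomial ℂ) (hσ : ∀ i, (σ i).degree < n) :
    -- there is g ∈ ℂ[x,t] (with x = X 0, t = X 1) such that, for every i,
    -- g(x, rᵢ + x·t) ≡ σᵢ(x) mod (xⁿ) in ℂ[x,t]
    ∃ g : MvPolynomial (Fin 2) ℂ, ∀ i,
      MvPolynomial.aeval ![(X 0 : MvPolynomial (Fin 2) ℂ), C (r i) + X 0 * X 1] g -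
          Polynomial.aeval (X 0 : MvPolynomial (Fin 2) ℂ) (σ i) ∈
        Ideal.span {(X 0 : MvPolynomial (Fin 2) ℂ) ^ n} :=
  exists_interpolating_polynomial_mod_xn_general (fun _ => n) r
    (fun _ _ hij => (sub_ne_zero.mpr (hr.ne hij)).isUnit) σ
end

section
/- Let P ∈ ℂ[z] and suppose there exist U, V ∈ ℂ[z] with U(z)P'(z) + V(z)P(z) = 1, where P' is the derivative of P. Set g(z) = z − P(z)U(z). Then g(r) = r and g'(r) = 0 for every root r of P, and P(z)² divides the composite polynomial P(g(z)) in ℂ[z]. -/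
/-!
Since `U * P' = 1 - V * P`, the map `g = X - P * U` is Newton's map `X - P / P'` with `1 / P'`
replaced by an inverse of `P'` modulo `P`. As for Newton's method, expanding `P` to first order
around `X` gives `P ∘ g ≡ P - P' * (P * U) = P * (V * P)` modulo `P ^ 2`.
-/

open Polynomial

theorem exists_aeval_add_eq_add_mul_sq {R S : Type*} [CommSemiring R] [CommRing S] [Algebra R S]
    (P : R[X]) (x h : S) :
    ∃ k : S, aeval (x + h) P = aeval x P + aeval x (derivative P) * h + k * h ^ 2 := by
  obtain ⟨k, hk⟩ := (P.map (algebraMap R S)).binomExpansion x h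
  exact ⟨k, by simpa only [derivative_map, eval_map_algebraMap] using hk⟩

section CommRing

variable {R : Type*} [CommRing R] {P U V : R[X]}

theorem derivative_X_sub_mul_eq_mul (hUV : U * derivative P + V * P = 1) :
    derivative (X - P * U) = P * (V - derivative U) := by
  rw [derivative_sub, derivative_X, derivative_mul]
  linear_combination -hUV

theorem sq_dvd_comp_X_sub_mul (hUV : U * derivative P + V * P = 1) :
    P ^ 2 ∣ P.comp (X - P * U) := by
  obtain ⟨k, hk⟩ := exists_aeval_add_eq_add_mul_sq P X (-(P * U))
  refine ⟨V + k * U ^ 2, ?_⟩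
  calc
    P.comp (X - P * U) = P + derivative P * -(P * U) + k * (-(P * U)) ^ 2 := by
      rw [comp_eq_aeval, sub_eq_add_neg, hk, aeval_X_left_apply, aeval_X_left_apply]
    _ = P ^ 2 * (V + k * U ^ 2) := by linear_combination -P * hUV

theorem g_fixes_roots_and_P_sq_dvd_P_comp_g_general
    (hUV : U * derivative P + V * P = 1) {g : R[X]} (hg : g = X - P * U) :
    (∀ r : R, P.eval r = 0 → g.eval r = r ∧ (derivative g).eval r = 0) ∧ P ^ 2 ∣ P.comp g := by
  subst hg
  refine ⟨fun r hr => ⟨?_, ?_⟩, sq_dvd_comp_X_sub_mul hUV⟩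
  · rw [eval_sub, eval_X, eval_mul, hr, zero_mul, sub_zero]
  · rw [derivative_X_sub_mul_eq_mul hUV, eval_mul, hr, zero_mul]

end CommRing

theorem g_fixes_roots_and_P_sq_dvd_P_comp_g
    (P U V : Polynomial ℂ)
    (hUV : U * Polynomial.derivative P + V * P = 1)
    (g : Polynomial ℂ) (hg : g = Polynomial.X - P * U) :
    (∀ r : ℂ, P.eval r = 0 → g.eval r = r ∧ (Polynomial.derivative g).eval r = 0) ∧
    P ^ 2 ∣ P.comp g :=
  g_fixes_roots_and_P_sq_dvd_P_comp_g_general hUV hg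
end

section
/- Let n ≥ 1 be an integer and P ∈ ℂ[z]. There exists a ℂ-linear derivation D on the quotient ring R = ℂ[X,Y,Z]/(X^n Y − P(Z)) satisfying D(x̄) = 0, D(z̄) = x̄^n, and D(ȳ) = P'(z̄), where x̄, ȳ, z̄ denote the residue classes of X, Y, Z and P' is the derivative of P; moreover D is locally nilpotent: for every a ∈ R there exists k ≥ 1 with D^k(a) = 0. -/
/-!
In `K[X, Y, Z]` take `D = f ∂/∂Z + P'(Z) ∂/∂Y` with `f ∈ K[X]`. It kills `f Y - P(Z)`, because both
terms have derivative `f P'(Z)`, and so it descends to the quotient. It is triangular for the order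
`X < Z < Y`: each variable is sent to a polynomial in smaller ones. Since the elements killed by a
power of a derivation form a subalgebra, induction along that order puts every variable in it.
-/

open MvPolynomial

/-- The coordinate ring `ℂ[X,Y,Z]/(Xⁿ·Y − P(Z))` of the classical Danielewski surface
`xⁿy = P(z)`.  Variables: `X 0 = X`, `X 1 = Y`, `X 2 = Z`. -/
abbrev DSRing (n : ℕ) (P : Polynomial ℂ) : Type :=
  MvPolynomial (Fin 3) ℂ ⧸
    Ideal.span {(X 0 : MvPolynomial (Fin 3) ℂ) ^ n * X 1 - Polynomial.aeval (X 2) P}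

noncomputable abbrev dsMk (n : ℕ) (P : Polynomial ℂ) :
    MvPolynomial (Fin 3) ℂ →+* DSRing n P :=
  Ideal.Quotient.mk _

theorem iterate_eq_zero_of_le {M F : Type*} [Zero M] [FunLike F M M] [ZeroHomClass F M M] (f : F)
    {k m : ℕ} (hkm : k ≤ m) {a : M} (ha : f^[k] a = 0) : f^[m] a = 0 := by
  obtain ⟨l, rfl⟩ := Nat.exists_eq_add_of_le' hkm
  rw [Function.iterate_add_apply, ha, iterate_map_zero]

section LocallyNilpotent

variable {R A : Type*} [CommSemiring R] [CommSemiring A] [Algebra R A]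

theorem derivation_iterate_add_mul_eq_zero (D : Derivation R A A) {k l : ℕ} {a b : A}
    (ha : D^[k] a = 0) (hb : D^[l] b = 0) : D^[k + l] (a * b) = 0 := by
  induction k generalizing a b l with
  | zero => rw [show a = 0 from ha, zero_mul, iterate_map_zero]
  | succ k ihk =>
    induction l generalizing b with
    | zero => rw [show b = 0 from hb, mul_zero, iterate_map_zero]
    | succ l ihl =>
      have hab : D^[k + 1 + l] (a * D b) = 0 := ihl hb
      have hba : D^[k + 1 + l] (b * D a) = 0 := by
        rw [add_assoc, add_comm 1 l, mul_comm]
        exact ihk ha hb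
      rw [← add_assoc, Function.iterate_succ_apply, D.leibniz, smul_eq_mul, smul_eq_mul,
        iterate_map_add, hab, hba, add_zero]

/-- The subalgebra `Nil(D)` of elements annihilated by some iterate of the derivation `D`. -/
def nilSubalgebra (D : Derivation R A A) : Subalgebra R A where
  carrier := {a | ∃ k : ℕ, D^[k] a = 0}
  mul_mem' := fun ⟨_, ha⟩ ⟨_, hb⟩ => ⟨_, derivation_iterate_add_mul_eq_zero D ha hb⟩
  add_mem' := by
    rintro a b ⟨k, ha⟩ ⟨l, hb⟩
    refine ⟨max k l, ?_⟩
    rw [iterate_map_add, iterate_eq_zero_of_le D (le_max_left k l) ha,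
      iterate_eq_zero_of_le D (le_max_right k l) hb, add_zero]
  algebraMap_mem' r := ⟨1, D.map_algebraMap r⟩

theorem mem_nilSubalgebra_of_apply_mem {D : Derivation R A A} {a : A}
    (h : D a ∈ nilSubalgebra D) : a ∈ nilSubalgebra D :=
  let ⟨k, hk⟩ := h
  ⟨k + 1, hk⟩

/-- A derivation is locally nilpotent if every element is annihilated by one of its iterates. -/
def IsLocallyNilpotent (D : Derivation R A A) : Prop :=
  ∀ a, a ∈ nilSubalgebra D

theorem IsLocallyNilpotent.of_semiconj {B : Type*} [CommSemiring B] [Algebra R B]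
    {D : Derivation R A A} {E : Derivation R B B} (hD : IsLocallyNilpotent D) {φ : A →+* B}
    (hφ : Function.Surjective φ) (h : Function.Semiconj φ D E) : IsLocallyNilpotent E := by
  intro b
  obtain ⟨a, rfl⟩ := hφ b
  obtain ⟨k, hk⟩ := hD a
  exact ⟨k, by rw [← (h.iterate_right k).eq, hk, map_zero]⟩

theorem isLocallyNilpotent_of_triangular {σ ι : Type*} [LT ι] [WellFoundedLT ι]
    {D : Derivation R (MvPolynomial σ R) (MvPolynomial σ R)} (w : σ → ι)
    (hD : ∀ i, D (X i) ∈ supported R {j | w j < w i}) : IsLocallyNilpotent D := by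
  have hX (i : σ) : X i ∈ nilSubalgebra D := by
    induction i using (InvImage.wf w wellFounded_lt).induction with
    | _ i ih =>
      have hle : supported R {j | w j < w i} ≤ nilSubalgebra D :=
        Algebra.adjoin_le (Set.image_subset_iff.2 ih)
      exact mem_nilSubalgebra_of_apply_mem (hle (hD i))
  have htop : ⊤ ≤ nilSubalgebra D :=
    adjoin_range_X (R := R) ▸ Algebra.adjoin_le (Set.range_subset_iff.2 hX)
  exact fun _ => htop Algebra.mem_top

end LocallyNilpotent

section Quotient

variable {R A : Type*} [CommSemiring R] [CommRing A] [Algebra R A]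

theorem derivation_apply_mem_span {D : Derivation R A A} {s : Set A}
    (hs : ∀ g ∈ s, D g ∈ Ideal.span s) {a : A} (ha : a ∈ Ideal.span s) :
    D a ∈ Ideal.span s := by
  induction ha using Submodule.span_induction with
  | mem g hg => exact hs g hg
  | zero => simp only [map_zero, zero_mem]
  | add a b _ _ iha ihb => simpa only [map_add] using add_mem iha ihb
  | smul c a ha iha =>
    rw [smul_eq_mul, D.leibniz]
    exact add_mem (Ideal.mul_mem_left _ _ iha) (Ideal.mul_mem_right _ _ ha)

theorem mkₐ_derivation_apply_eq_zero {D : Derivation R A A} {I : Ideal A} (hI : ∀ a ∈ I, D a ∈ I)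
    (a : A) (ha : Ideal.Quotient.mkₐ R I a = 0) : Ideal.Quotient.mkₐ R I (D a) = 0 :=
  Ideal.Quotient.eq_zero_iff_mem.2 (hI a (Ideal.Quotient.eq_zero_iff_mem.1 ha))

/-- The derivation of `A ⧸ I` induced by a derivation of `A` that preserves the ideal `I`. -/
noncomputable def quotientDerivation (D : Derivation R A A) {I : Ideal A}
    (hI : ∀ a ∈ I, D a ∈ I) : Derivation R (A ⧸ I) (A ⧸ I) :=
  Derivation.liftOfSurjective (Ideal.Quotient.mkₐ_surjective R I) (mkₐ_derivation_apply_eq_zero hI)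

theorem quotientDerivation_mk (D : Derivation R A A) {I : Ideal A} (hI : ∀ a ∈ I, D a ∈ I)
    (a : A) : quotientDerivation D hI (Ideal.Quotient.mk I a) = Ideal.Quotient.mk I (D a) :=
  Derivation.liftOfSurjective_apply (Ideal.Quotient.mkₐ_surjective R I)
    (mkₐ_derivation_apply_eq_zero hI) a

theorem IsLocallyNilpotent.quotientDerivation {D : Derivation R A A} (hD : IsLocallyNilpotent D)
    {I : Ideal A} (hI : ∀ a ∈ I, D a ∈ I) : IsLocallyNilpotent (quotientDerivation D hI) :=
  hD.of_semiconj Ideal.Quotient.mk_surjective fun a => (quotientDerivation_mk D hI a).symm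

end Quotient

section Danielewski

variable {K : Type*} [CommRing K] {f : MvPolynomial (Fin 3) K} (P : Polynomial K)

/-- The ideal of the surface `f(x) y = P(z)`, where `X 0 = X`, `X 1 = Y`, `X 2 = Z`. Here `f` is
encoded as a polynomial in three variables lying in `supported K {0}`, so that `DSRing n P` is
definitionally the quotient for `f = X 0 ^ n`. -/
noncomputable abbrev danielewskiIdeal (f : MvPolynomial (Fin 3) K) (P : Polynomial K) :
    Ideal (MvPolynomial (Fin 3) K) :=
  Ideal.span {f * X 1 - Polynomial.aeval (X 2) P}

/-- The derivation `f ∂/∂Z + P'(Z) ∂/∂Y` of `K[X, Y, Z]`, which induces the canonical derivation on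
the surface `f(x) y = P(z)` when `f ∈ K[X]`. -/
noncomputable def danielewskiDerivation (f : MvPolynomial (Fin 3) K) (P : Polynomial K) :
    Derivation K (MvPolynomial (Fin 3) K) (MvPolynomial (Fin 3) K) :=
  mkDerivation K ![0, Polynomial.aeval (X 2) (Polynomial.derivative P), f]

theorem danielewskiDerivation_X_zero : danielewskiDerivation f P (X 0) = 0 :=
  mkDerivation_X ..

theorem danielewskiDerivation_X_one :
    danielewskiDerivation f P (X 1) = Polynomial.aeval (X 2) (Polynomial.derivative P) :=
  mkDerivation_X ..

theorem danielewskiDerivation_X_two : danielewskiDerivation f P (X 2) = f :=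
  mkDerivation_X ..

theorem danielewskiDerivation_mul_X_sub_aeval (hf : f ∈ supported K {0}) :
    danielewskiDerivation f P (f * X 1 - Polynomial.aeval (X 2) P) = 0 := by
  have hDf : danielewskiDerivation f P f = 0 :=
    derivation_eqOn_supported (D₂ := 0)
      (Set.eqOn_singleton.2 (danielewskiDerivation_X_zero P)) hf
  rw [map_sub, Derivation.leibniz, Derivation.map_aeval, hDf, danielewskiDerivation_X_one,
    danielewskiDerivation_X_two, smul_zero, add_zero, smul_eq_mul, smul_eq_mul, mul_comm, sub_self]

theorem danielewskiDerivation_apply_mem_ideal (hf : f ∈ supported K {0}) :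
    ∀ a ∈ danielewskiIdeal f P, danielewskiDerivation f P a ∈ danielewskiIdeal f P := by
  refine fun a => derivation_apply_mem_span ?_
  rintro _ rfl
  rw [danielewskiDerivation_mul_X_sub_aeval P hf]
  exact zero_mem _

theorem danielewskiDerivation_isLocallyNilpotent (hf : f ∈ supported K {0}) :
    IsLocallyNilpotent (danielewskiDerivation f P) := by
  refine isLocallyNilpotent_of_triangular ![0, 2, 1] fun i => ?_
  rw [danielewskiDerivation, mkDerivation_X]
  fin_cases i
  · exact zero_mem _
  · refine Algebra.adjoin_mono ?_ (Polynomial.aeval_mem_adjoin_singleton K (X 2))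
    exact Set.singleton_subset_iff.2 ⟨2, by simp, rfl⟩
  · exact supported_mono (by simp) hf

theorem canonical_locally_nilpotent_derivation_general (hf : f ∈ supported K {0}) :
    let mk := Ideal.Quotient.mk (danielewskiIdeal f P)
    ∃ D : Derivation K (MvPolynomial (Fin 3) K ⧸ danielewskiIdeal f P)
        (MvPolynomial (Fin 3) K ⧸ danielewskiIdeal f P),
      D (mk (X 0)) = 0 ∧
      D (mk (X 2)) = mk f ∧
      D (mk (X 1)) = Polynomial.aeval (mk (X 2)) (Polynomial.derivative P) ∧
      ∀ a, ∃ k : ℕ, 1 ≤ k ∧ (⇑D)^[k] a = 0 := by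
  intro mk
  have hI := danielewskiDerivation_apply_mem_ideal P hf
  refine ⟨quotientDerivation _ hI, ?_, ?_, ?_, fun a => ?_⟩
  · rw [quotientDerivation_mk, danielewskiDerivation_X_zero, map_zero]
  · rw [quotientDerivation_mk, danielewskiDerivation_X_two]
  · rw [quotientDerivation_mk, danielewskiDerivation_X_one]
    exact (Polynomial.aeval_algHom_apply (Ideal.Quotient.mkₐ K _) _ _).symm
  · obtain ⟨k, hk⟩ := (danielewskiDerivation_isLocallyNilpotent P hf).quotientDerivation hI a
    exact ⟨k + 1, Nat.le_add_left 1 k, iterate_eq_zero_of_le _ k.le_succ hk⟩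

end Danielewski

theorem canonical_locally_nilpotent_derivation (n : ℕ) (hn : 1 ≤ n) (P : Polynomial ℂ) :
    ∃ D : Derivation ℂ (DSRing n P) (DSRing n P),
      D (dsMk n P (X 0)) = 0 ∧
      D (dsMk n P (X 2)) = (dsMk n P (X 0)) ^ n ∧
      D (dsMk n P (X 1)) = Polynomial.aeval (dsMk n P (X 2)) (Polynomial.derivative P) ∧
      ∀ a : DSRing n P, ∃ k : ℕ, 1 ≤ k ∧ (⇑D)^[k] a = 0 := by
  have hf : (X 0 ^ n : MvPolynomial (Fin 3) ℂ) ∈ supported ℂ {0} :=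
    pow_mem (X_mem_supported.2 (Set.mem_singleton 0)) n
  simpa only [map_pow] using canonical_locally_nilpotent_derivation_general P hf
end
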